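/- arXiv:math/9201303 — 5 statements merged into one kernel-verified Lean document; each statement's English description precedes it below -/
import Mathlib

section
/- For every sufficiently large integer $n$, let $N_0 = \lfloor n \ln n \ln\ln n \rfloor$ and let $X$ be a binomial random variable with parameters $N_0$ and success probability $1/n$. Then $\Pr\bigl(X \geq \ln n \,(\ln\ln n)^2\bigr) \leq \exp\bigl(-(\ln 2)\,\ln n\,(\ln\ln n)^2 + \ln n \cdot \ln\ln n\bigr)$, and consequently for every constant $K > 0$, $n^{K} \Pr\bigl(X \geq \ln n \,(\ln\ln n)^2\bigr) \to 0$ as $n \to \infty$. -/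
open MeasureTheory Filter Real

lemma binom_tail_aux {Ω : Type*} [MeasurableSpace Ω] (μ : Measure Ω) [IsProbabilityMeasure μ]
    (X : Ω → ℕ) (N : ℕ) (p a : ℝ) (hp0 : 0 ≤ p) (hp1 : p ≤ 1)
    (h : ∀ k : ℕ, (μ {ω | X ω = k}).toReal = (Nat.choose N k : ℝ) * p ^ k * (1 - p) ^ (N - k)) :
    (μ {ω | a ≤ (X ω : ℝ)}).toReal ≤ Real.exp (-(Real.log 2) * a + N * p) := by
  have hnull : μ {ω | N < X ω} = 0 := by
    have hs : {ω | N < X ω} ⊆ ⋃ k : ℕ, {ω | X ω = N + 1 + k} := by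
      intro ω hω
      simp only [Set.mem_setOf_eq, Set.mem_iUnion] at hω ⊢
      exact ⟨X ω - (N + 1), by omega⟩
    refine measure_mono_null hs (measure_iUnion_null fun k => ?_)
    have h1 := h (N + 1 + k)
    rw [Nat.choose_eq_zero_of_lt (by omega)] at h1
    simp only [Nat.cast_zero, zero_mul] at h1
    rcases (ENNReal.toReal_eq_zero_iff _).1 h1 with h2 | h2
    · exact h2
    · exact absurd h2 (measure_ne_top _ _)
  set S := (Finset.range (N + 1)).filter (fun k : ℕ => a ≤ (k : ℝ)) with hS
  have hsub : {ω | a ≤ (X ω : ℝ)} ⊆ {ω | N < X ω} ∪ ⋃ k ∈ S, {ω | X ω = k} := by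
    intro ω hω
    by_cases hN : N < X ω
    · exact Or.inl hN
    · right
      simp only [Set.mem_iUnion]
      exact ⟨X ω, by simp [hS]; exact ⟨by omega, hω⟩, rfl⟩
  have h1 : (μ {ω | a ≤ (X ω : ℝ)}).toReal ≤ ∑ k ∈ S, (μ {ω | X ω = k}).toReal := by
    rw [← ENNReal.toReal_sum (fun k _ => measure_ne_top _ _)]
    refine ENNReal.toReal_mono ?_ ?_
    · exact (ENNReal.sum_lt_top.2 fun k _ => measure_lt_top _ _).ne
    · refine (measure_mono hsub).trans ((measure_union_le _ _).trans ?_)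
      rw [hnull, zero_add]
      exact measure_biUnion_finset_le _ _
  have hq : 0 ≤ 1 - p := by linarith
  have h2 : ∑ k ∈ S, (μ {ω | X ω = k}).toReal ≤
      ∑ k ∈ Finset.range (N + 1), Real.exp (-(Real.log 2) * a) *
        ((2 * p) ^ k * (1 - p) ^ (N - k) * (Nat.choose N k : ℝ)) := by
    refine (Finset.sum_le_sum (fun k hk => ?_)).trans
      (Finset.sum_le_sum_of_subset_of_nonneg (Finset.filter_subset _ _) (fun k _ _ => by positivity))
    rw [h k]
    have hak : a ≤ (k : ℝ) := (Finset.mem_filter.1 hk).2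
    have h3 : 1 ≤ Real.exp (-(Real.log 2) * a) * 2 ^ k := by
      have : (2 : ℝ) ^ k = Real.exp (Real.log 2 * k) := by
        rw [mul_comm, Real.exp_nat_mul, Real.exp_log (by norm_num)]
      rw [this, ← Real.exp_add]
      apply Real.one_le_exp
      nlinarith [Real.log_pos (by norm_num : (1 : ℝ) < 2)]
    have h4 : 0 ≤ (Nat.choose N k : ℝ) * p ^ k * (1 - p) ^ (N - k) := by positivity
    calc _ ≤ (Real.exp (-(Real.log 2) * a) * 2 ^ k) *
          ((Nat.choose N k : ℝ) * p ^ k * (1 - p) ^ (N - k)) := le_mul_of_one_le_left h4 h3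
      _ = _ := by rw [mul_pow]; ring
  refine (h1.trans h2).trans ?_
  rw [← Finset.mul_sum, ← add_pow, Real.exp_add, Real.exp_nat_mul]
  have h5 : 2 * p + (1 - p) ≤ Real.exp p := by linarith [Real.add_one_le_exp p]
  gcongr

/-- **Lemma 9, second part.** For each `n ≥ 3`, let
`N₀ = ⌊n · ln n · ln ln n⌋` and let `X n` be a binomial random variable with
parameters `N₀` and success probability `1/n`.  Then for every sufficiently
large `n`,
`Pr(X n ≥ ln n (ln ln n)²) ≤ exp(-(ln 2) ln n (ln ln n)² + ln n · ln ln n)`,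
and consequently for every constant `K > 0`,
`n^K * Pr(X n ≥ ln n (ln ln n)²) → 0` as `n → ∞`. -/
theorem lemma9_second_part
    (Ω : ℕ → Type*) [∀ n, MeasurableSpace (Ω n)]
    (μ : ∀ n, Measure (Ω n)) [∀ n, IsProbabilityMeasure (μ n)]
    (X : ∀ n, Ω n → ℕ) (hmeas : ∀ n, Measurable (X n))
    (hbinom : ∀ n, 3 ≤ n → ∀ k : ℕ,
      ((μ n) {ω | X n ω = k}).toReal =
        (Nat.choose ⌊(n : ℝ) * Real.log n * Real.log (Real.log n)⌋₊ k : ℝ) *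
          (1 / n) ^ k *
          (1 - 1 / n) ^ (⌊(n : ℝ) * Real.log n * Real.log (Real.log n)⌋₊ - k)) :
    (∃ n₀ : ℕ, ∀ n : ℕ, n₀ ≤ n →
      ((μ n) {ω | Real.log n * (Real.log (Real.log n)) ^ 2 ≤ (X n ω : ℝ)}).toReal ≤
        Real.exp (-(Real.log 2) * Real.log n * (Real.log (Real.log n)) ^ 2 +
          Real.log n * Real.log (Real.log n))) ∧
    (∀ K : ℝ, 0 < K →
      Tendsto (fun n : ℕ =>
          (n : ℝ) ^ K *
            ((μ n) {ω | Real.log n * (Real.log (Real.log n)) ^ 2 ≤ (X n ω : ℝ)}).toReal)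
        atTop (nhds 0)) := by
  have key : ∀ n : ℕ, 3 ≤ n →
      ((μ n) {ω | Real.log n * (Real.log (Real.log n)) ^ 2 ≤ (X n ω : ℝ)}).toReal ≤
        Real.exp (-(Real.log 2) * Real.log n * (Real.log (Real.log n)) ^ 2 +
          Real.log n * Real.log (Real.log n)) := by
    intro n hn
    have hn3 : (3 : ℝ) ≤ n := by exact_mod_cast hn
    have hn0 : (0 : ℝ) < n := by linarith
    have hl : 1 ≤ Real.log n := by
      rw [Real.le_log_iff_exp_le hn0]
      linarith [Real.exp_one_lt_d9]
    have hll : 0 ≤ Real.log (Real.log n) := Real.log_nonneg hl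
    refine (binom_tail_aux (μ n) (X n) _ (1 / n) _ (by positivity)
      (by rw [div_le_one hn0]; linarith) (hbinom n hn)).trans ?_
    apply Real.exp_le_exp.2
    have h1 : (⌊(n : ℝ) * Real.log n * Real.log (Real.log n)⌋₊ : ℝ) * (1 / n) ≤
        Real.log n * Real.log (Real.log n) := by
      rw [mul_one_div, div_le_iff₀ hn0]
      refine (Nat.floor_le (by positivity)).trans (le_of_eq (by ring))
    linarith
  refine ⟨⟨3, key⟩, fun K hK => ?_⟩
  have hL : Tendsto (fun n : ℕ => Real.log (n : ℝ)) atTop atTop :=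
    Real.tendsto_log_atTop.comp tendsto_natCast_atTop_atTop
  have hLL : Tendsto (fun n : ℕ => Real.log (Real.log (n : ℝ))) atTop atTop :=
    Real.tendsto_log_atTop.comp hL
  have hlog2 : 0 < Real.log 2 := Real.log_pos (by norm_num)
  have hlim : Tendsto (fun n : ℕ => Real.exp (-Real.log n)) atTop (nhds 0) :=
    Real.tendsto_exp_neg_atTop_nhds_zero.comp hL
  refine squeeze_zero' (Eventually.of_forall fun n => by positivity) ?_ hlim
  filter_upwards [eventually_ge_atTop 3, hLL.eventually_ge_atTop ((K + 2) / Real.log 2),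
    hLL.eventually_ge_atTop 1, hL.eventually_ge_atTop 0] with n hn h1 h2 h3
  have hn0 : (0 : ℝ) < n := by exact_mod_cast (by omega : 0 < n)
  refine (mul_le_mul_of_nonneg_left (key n hn) (by positivity)).trans ?_
  rw [Real.rpow_def_of_pos hn0, ← Real.exp_add]
  apply Real.exp_le_exp.2
  set l := Real.log (Real.log (n : ℝ))
  rw [div_le_iff₀ hlog2] at h1
  have h4 : K - Real.log 2 * l ^ 2 + l + 1 ≤ 0 := by nlinarith
  nlinarith [mul_nonneg h3 (neg_nonneg.2 h4)]
end

section
/- For every $n \geq 1$ and every preference profile for $n$ girls and $n$ boys, there exists a stable matching. -/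
/-- A preference profile for `n` girls and `n` boys: each girl `g` ranks the
boys via a bijection `P.1 g : Fin n ≃ Fin n` (boy `b` occupies position
`P.1 g b`, position `0` being her favorite), and each boy `b` ranks the girls
via `P.2 b`. -/
abbrev PrefProfile (n : ℕ) := (Fin n → Equiv.Perm (Fin n)) × (Fin n → Equiv.Perm (Fin n))

/-- Girl `g` strictly prefers boy `b` to boy `b'`. -/
def GirlPrefers {n : ℕ} (P : PrefProfile n) (g b b' : Fin n) : Prop := P.1 g b < P.1 g b'

/-- Boy `b` strictly prefers girl `g` to girl `g'`. -/
def BoyPrefers {n : ℕ} (P : PrefProfile n) (b g g' : Fin n) : Prop := P.2 b g < P.2 b g'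

/-- A matching `M` (pairing girl `g` with boy `M g`) is stable if no girl `g`
and boy `b` who are not matched to each other prefer each other to their
current partners. -/
def IsStableMatching {n : ℕ} (P : PrefProfile n) (M : Fin n ≃ Fin n) : Prop :=
  ¬ ∃ g b, b ≠ M g ∧ GirlPrefers P g b (M g) ∧ BoyPrefers P b g (M.symm b)

/-- **Existence of stable matchings (Gale–Shapley).** For every `n ≥ 1` and
every preference profile for `n` girls and `n` boys, there exists a stable
matching. -/
theorem exists_stable_matching (n : ℕ) (hn : 1 ≤ n) (P : PrefProfile n) :
    ∃ M : Fin n ≃ Fin n, IsStableMatching P M := by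
  classical
  let I : (Fin n → Fin n) → Prop := fun f => ∀ g b, P.1 g b < f g →
    ∃ g', P.1 g' b = f g' ∧ P.2 b g' < P.2 b g
  have h0 : I (fun _ => ⟨0, hn⟩) := by
    intro g b h
    exact absurd h (Nat.not_lt_zero _)
  obtain ⟨f, hf, hmax⟩ := Finset.exists_max_image
    (Finset.univ.filter I) (fun f => ∑ g, (f g : ℕ)) ⟨_, by simpa using h0⟩
  have hfI : I f := by simpa using hf
  let c : Fin n → Fin n := fun g => (P.1 g).symm (f g)
  have hc : ∀ g, P.1 g (c g) = f g := fun g => by simp [c]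
  have hc' : ∀ g b, P.1 g b = f g → c g = b := fun g b h => by simp [c, ← h]
  have hinj : Function.Injective c := by
    by_contra hni
    have : ∃ g1 g2, c g1 = c g2 ∧ P.2 (c g2) g1 < P.2 (c g2) g2 := by
      simp only [Function.Injective, not_forall] at hni
      obtain ⟨a, b, hab, hne⟩ := hni
      rcases lt_trichotomy (P.2 (c b) a) (P.2 (c b) b) with h | h | h
      · exact ⟨a, b, hab, h⟩
      · exact absurd ((P.2 (c b)).injective h) hne
      · exact ⟨b, a, hab.symm, by rw [hab]; exact h⟩
    obtain ⟨g1, g2, h12, hlt⟩ := this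
    have hroom : (f g2 : ℕ) + 1 < n := by
      by_contra hge
      apply hni
      apply Finite.injective_iff_surjective.mpr
      intro b
      rcases lt_or_ge (P.1 g2 b) (f g2) with h | h
      · obtain ⟨g', h1, _⟩ := hfI g2 b h
        exact ⟨g', hc' _ _ h1⟩
      · refine ⟨g2, hc' _ _ ?_⟩
        apply Fin.ext
        have := (P.1 g2 b).isLt
        have h' : (f g2 : ℕ) ≤ (P.1 g2 b : ℕ) := h
        omega
    have hne : g1 ≠ g2 := by
      rintro rfl
      exact lt_irrefl _ hlt
    let f' := Function.update f g2 ⟨(f g2 : ℕ) + 1, hroom⟩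
    have hw : ∀ g b, (∃ g', P.1 g' b = f g' ∧ P.2 b g' < P.2 b g) →
        ∃ g', P.1 g' b = f' g' ∧ P.2 b g' < P.2 b g := by
      rintro g b ⟨g', h1, h2⟩
      by_cases hg : g' = g2
      · subst hg
        have hb := hc' _ _ h1
        refine ⟨g1, ?_, ?_⟩
        · simp only [f', Function.update_of_ne hne]
          rw [← hb, ← h12, hc]
        · rw [hb] at hlt
          exact hlt.trans h2
      · exact ⟨g', by simpa only [f', Function.update_of_ne hg] using h1, h2⟩
    have hf' : I f' := by
      intro g b h
      by_cases hg : g = g2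
      · subst hg
        rcases lt_or_ge (P.1 g b) (f g) with h3 | h3
        · exact hw _ _ (hfI _ _ h3)
        · have h4 : (P.1 g b : ℕ) < (f g : ℕ) + 1 := by
            simpa [f', Fin.lt_def] using h
          have h5 : (f g : ℕ) ≤ (P.1 g b : ℕ) := h3
          have hb : c g = b := hc' _ _ (Fin.ext (by omega))
          refine ⟨g1, ?_, by rw [hb] at hlt; exact hlt⟩
          simp only [f', Function.update_of_ne hne]
          rw [← hb, ← h12, hc]
      · exact hw _ _ (hfI _ _ (by simpa only [f', Function.update_of_ne hg] using h))
    have hle := hmax f' (by simpa using hf')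
    refine absurd hle (not_le.mpr ?_)
    apply Finset.sum_lt_sum
    · intro i _
      by_cases hi : i = g2
      · subst hi; simp [f']
      · simp [f', hi]
    · exact ⟨g2, Finset.mem_univ _, by simp [f']⟩
  let M : Fin n ≃ Fin n := Equiv.ofBijective c (Finite.injective_iff_bijective.mp hinj)
  refine ⟨M, ?_⟩
  rintro ⟨g, b, _, h1, h2⟩
  have h1' : P.1 g b < f g := by rw [← hc g]; exact h1
  obtain ⟨g', h3, h4⟩ := hfI g b h1'
  have h5 : M.symm b = g' := by
    rw [Equiv.symm_apply_eq]
    exact (hc' _ _ h3).symm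
  unfold BoyPrefers at h2
  rw [h5] at h2
  exact lt_asymm h2 h4
end

section
/- For every $n \geq 1$ and every preference profile for $n$ girls and $n$ boys, there exists a stable matching $M_0$ such that for every stable matching $M$: (i) every boy $b$ weakly prefers his partner $M_0^{-1}\,b$ in $M_0$ to his partner $M^{-1}\,b$ in $M$, and (ii) every girl $g$ weakly prefers her partner $M\,g$ in $M$ to her partner $M_0\,g$ in $M_0$. In other words, there is a boy-optimal stable matching, and it gives every girl her least preferred stable husband. -/
/-- Deferred-acceptance invariant. -/
def DAInv {n : ℕ} (P : PrefProfile n) (f : Fin n → Fin n) : Prop :=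
  (∀ b g, P.2 b g < P.2 b (f b) → ∃ b', f b' = g ∧ P.1 g b' < P.1 g b) ∧
  (∀ M : Fin n ≃ Fin n, IsStableMatching P M → ∀ b, P.2 b (f b) ≤ P.2 b (M.symm b))

lemma DAInv.step {n : ℕ} {P : PrefProfile n} {f : Fin n → Fin n} (h : DAInv P f)
    {b1 b2 : Fin n} (hf : f b1 = f b2) (hlt : P.1 (f b2) b1 < P.1 (f b2) b2) :
    ∃ f', DAInv P f' ∧ ∑ b, (P.2 b (f b) : ℕ) < ∑ b, (P.2 b (f' b) : ℕ) := by
  obtain ⟨ha, hb⟩ := h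
  have hne : b1 ≠ b2 := by rintro rfl; exact lt_irrefl _ hlt
  have hnext : (P.2 b2 (f b2) : ℕ) + 1 < n := by
    by_contra hcon
    have hs : Function.Surjective f := by
      intro g
      by_cases hg : g = f b2
      · exact ⟨b2, hg.symm⟩
      · have h1 : P.2 b2 g ≠ P.2 b2 (f b2) := fun h => hg ((P.2 b2).injective h)
        have h2 : P.2 b2 g < P.2 b2 (f b2) := by
          rw [Fin.lt_def]
          have := (P.2 b2 g).isLt
          have := Fin.val_ne_of_ne h1
          omega
        obtain ⟨b', hb', _⟩ := ha b2 g h2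
        exact ⟨b', hb'⟩
    exact hne ((Finite.injective_iff_surjective.mpr hs) hf)
  obtain ⟨g', hg'⟩ : ∃ g', P.2 b2 g' = ⟨(P.2 b2 (f b2) : ℕ) + 1, hnext⟩ := (P.2 b2).surjective _
  have hval : (P.2 b2 g' : ℕ) = P.2 b2 (f b2) + 1 := by rw [hg']
  refine ⟨Function.update f b2 g', ⟨?_, ?_⟩, ?_⟩
  · have key : ∀ b g, (∃ b', f b' = g ∧ P.1 g b' < P.1 g b) →
        ∃ b', Function.update f b2 g' b' = g ∧ P.1 g b' < P.1 g b := by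
      rintro b g ⟨b', rfl, h2⟩
      by_cases hbb : b' = b2
      · subst hbb
        exact ⟨b1, by rw [Function.update_of_ne hne, hf], hlt.trans h2⟩
      · exact ⟨b', by rw [Function.update_of_ne hbb], h2⟩
    intro b g hbg
    apply key
    by_cases hbb : b = b2
    · subst hbb
      rw [Function.update_self] at hbg
      by_cases hg : g = f b
      · subst hg
        exact ⟨b1, hf, hlt⟩
      · apply ha
        have h1 : P.2 b g ≠ P.2 b (f b) := fun h => hg ((P.2 b).injective h)
        have := Fin.val_ne_of_ne h1
        rw [Fin.lt_def] at hbg ⊢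
        omega
    · rw [Function.update_of_ne hbb] at hbg
      exact ha b g hbg
  · intro M hM b
    by_cases hbb : b = b2
    · subst hbb
      rw [Function.update_self]
      have h0 := hb M hM b
      have hn : M.symm b ≠ f b := by
        intro hMb
        have hMg : M (f b) = b := by rw [← hMb]; simp
        apply hM
        refine ⟨f b, b1, by rw [hMg]; exact hne, by unfold GirlPrefers; rwa [hMg], ?_⟩
        unfold BoyPrefers
        have h1 := hb M hM b1
        rw [hf] at h1
        refine lt_of_le_of_ne h1 fun h => hne ?_
        have h3 := (P.2 b1).injective h
        rw [← hMg, h3]; simp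
      have h1 : P.2 b (f b) ≠ P.2 b (M.symm b) := fun h => hn ((P.2 b).injective h).symm
      have := Fin.val_ne_of_ne h1
      rw [Fin.le_def] at h0 ⊢
      omega
    · rw [Function.update_of_ne hbb]
      exact hb M hM b
  · apply Finset.sum_lt_sum
    · intro b _
      by_cases hbb : b = b2
      · subst hbb; rw [Function.update_self]; omega
      · rw [Function.update_of_ne hbb]
    · exact ⟨b2, Finset.mem_univ _, by rw [Function.update_self]; omega⟩

/-- **Boy-optimal / girl-pessimal stable matching.** For every `n ≥ 1` and
every preference profile, there is a stable matching `M₀` such that for every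
stable matching `M`: (i) every boy `b` weakly prefers his partner in `M₀` to
his partner in `M`, and (ii) every girl `g` weakly prefers her partner in `M`
to her partner in `M₀`. -/
theorem exists_boy_optimal_stable_matching (n : ℕ) (hn : 1 ≤ n) (P : PrefProfile n) :
    ∃ M₀ : Fin n ≃ Fin n, IsStableMatching P M₀ ∧
      ∀ M : Fin n ≃ Fin n, IsStableMatching P M →
        (∀ b : Fin n, BoyPrefers P b (M₀.symm b) (M.symm b) ∨ M₀.symm b = M.symm b) ∧
        (∀ g : Fin n, GirlPrefers P g (M g) (M₀ g) ∨ M g = M₀ g) := by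
  have h0 : DAInv P (fun b => (P.2 b).symm ⟨0, hn⟩) := by
    constructor
    · intro b g h
      simp [Fin.lt_def] at h
    · intro M _ b
      simp [Fin.le_def]
  obtain ⟨f, hfI, hmax⟩ := Set.exists_max_image {f | DAInv P f}
    (fun f => ∑ b, (P.2 b (f b) : ℕ)) (Set.toFinite _) ⟨_, h0⟩
  have hinj : Function.Injective f := by
    intro b1 b2 hf
    by_contra hne
    have hne' : P.1 (f b2) b1 ≠ P.1 (f b2) b2 := fun h => hne ((P.1 _).injective h)
    rcases lt_or_gt_of_ne hne' with h | h
    · obtain ⟨f', h1, h2⟩ := DAInv.step hfI hf h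
      exact absurd (hmax f' h1) (not_le.mpr h2)
    · rw [← hf] at h
      obtain ⟨f', h1, h2⟩ := DAInv.step hfI hf.symm h
      exact absurd (hmax f' h1) (not_le.mpr h2)
  obtain ⟨ha, hb⟩ := hfI
  let e : Fin n ≃ Fin n := Equiv.ofBijective f (Finite.injective_iff_bijective.mp hinj)
  have he : ∀ b, e b = f b := fun _ => rfl
  refine ⟨e.symm, ?_, ?_⟩
  · rintro ⟨g, b, _, h1, h2⟩
    unfold GirlPrefers at h1
    unfold BoyPrefers at h2
    obtain ⟨b', h3, h4⟩ := ha b g h2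
    have : e.symm g = b' := by rw [← h3, ← he]; simp
    rw [this] at h1
    exact lt_asymm h1 h4
  · intro M hM
    refine ⟨fun b => ?_, fun g => ?_⟩
    · rcases (hb M hM b).lt_or_eq with h | h
      · exact Or.inl h
      · exact Or.inr ((P.2 b).injective h)
    · rcases lt_trichotomy (P.1 g (M g)) (P.1 g (e.symm g)) with h | h | h
      · exact Or.inl h
      · exact Or.inr ((P.1 g).injective h)
      · exfalso
        have hne : e.symm g ≠ M g := by intro h'; rw [h'] at h; exact lt_irrefl _ h
        apply hM
        refine ⟨g, e.symm g, hne, h, ?_⟩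
        have h1 := hb M hM (e.symm g)
        rw [← he, Equiv.apply_symm_apply] at h1
        refine lt_of_le_of_ne h1 fun h' => hne ?_
        have h3 := (P.2 _).injective h'
        rw [Equiv.eq_symm_apply] at h3
        exact h3.symm
end

section
/- Fix $n \geq 1$, a preference profile for $n$ girls and $n$ boys, a girl $g$, and a boy $s$ that is a stable husband of $g$. Then there exists a stable matching $M^*$ with $M^*\,g = s$ such that for every stable matching $M$ with $M\,g = s$ and every boy $b$, boy $b$ weakly prefers his partner $(M^*)^{-1}\,b$ in $M^*$ to his partner $M^{-1}\,b$ in $M$. That is, among all stable matchings pairing $g$ with $s$, there is one that simultaneously gives every boy his best possible partner. -/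
theorem join_exists {n : ℕ} (P : PrefProfile n) (M N : Fin n ≃ Fin n)
    (hM : IsStableMatching P M) (hN : IsStableMatching P N) :
    ∃ J : Fin n ≃ Fin n, IsStableMatching P J ∧
      (∀ b, J.symm b = M.symm b ∨ J.symm b = N.symm b) ∧
      (∀ b, P.2 b (J.symm b) ≤ P.2 b (M.symm b)) ∧
      (∀ b, P.2 b (J.symm b) ≤ P.2 b (N.symm b)) := by
  have key : ∀ A B : Fin n ≃ Fin n, IsStableMatching P A → IsStableMatching P B →
      ∀ b b' : Fin n, A.symm b = B.symm b' →
      P.2 b (A.symm b) ≤ P.2 b (B.symm b) → P.2 b' (B.symm b') ≤ P.2 b' (A.symm b') →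
      b = b' := by
    intro A B hA hB b b' h h1 h2
    by_contra hne
    have hAx : A (A.symm b) = b := A.apply_symm_apply b
    have hBx : B (A.symm b) = b' := by rw [h]; exact B.apply_symm_apply b'
    have h1' : P.2 b (A.symm b) < P.2 b (B.symm b) := by
      refine lt_of_le_of_ne h1 fun e => hne ?_
      have e' := (P.2 b).injective e
      rw [h] at e'
      exact (B.symm.injective e').symm
    have h2' : P.2 b' (A.symm b) < P.2 b' (A.symm b') := by
      rw [← h] at h2
      refine lt_of_le_of_ne h2 fun e => hne ?_
      exact A.symm.injective ((P.2 b').injective e)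
    rcases lt_trichotomy (P.1 (A.symm b) b) (P.1 (A.symm b) b') with c | c | c
    · exact hB ⟨A.symm b, b, by rw [hBx]; exact hne, by rw [hBx]; exact c, h1'⟩
    · exact hne ((P.1 _).injective c)
    · exact hA ⟨A.symm b, b', by rw [hAx]; exact Ne.symm hne, by rw [hAx]; exact c, h2'⟩
  let f : Fin n → Fin n := fun b =>
    if P.2 b (M.symm b) ≤ P.2 b (N.symm b) then M.symm b else N.symm b
  have hf : ∀ b, (f b = M.symm b ∨ f b = N.symm b) ∧
      P.2 b (f b) ≤ P.2 b (M.symm b) ∧ P.2 b (f b) ≤ P.2 b (N.symm b) := by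
    intro b
    by_cases h : P.2 b (M.symm b) ≤ P.2 b (N.symm b)
    · simp [f, h]
    · simp [f, h, le_of_not_ge h]
  have hinj : Function.Injective f := by
    intro b b' h
    obtain ⟨h1, h2, h3⟩ := hf b
    obtain ⟨h1', h2', h3'⟩ := hf b'
    rcases h1 with e | e <;> rcases h1' with e' | e'
    · exact M.symm.injective (by rw [← e, ← e', h])
    · exact key M N hM hN b b' (by rw [← e, ← e', h]) (e ▸ h3) (e' ▸ h2')
    · exact key N M hN hM b b' (by rw [← e, ← e', h]) (e ▸ h2) (e' ▸ h3')
    · exact N.symm.injective (by rw [← e, ← e', h])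
  let K := Equiv.ofBijective f (Finite.injective_iff_bijective.mp hinj)
  have hK : ∀ b, K.symm.symm b = f b := fun b => rfl
  refine ⟨K.symm, ?_, fun b => (hf b).1, fun b => (hf b).2.1, fun b => (hf b).2.2⟩
  rintro ⟨x, b, hb, hg, hbp⟩
  unfold GirlPrefers at hg
  unfold BoyPrefers at hbp
  rw [hK] at hbp
  have hx : f (K.symm x) = x := K.apply_symm_apply x
  rcases (hf (K.symm x)).1 with e | e
  · have e2 : M x = K.symm x := (Equiv.eq_symm_apply M).1 (hx.symm.trans e)
    exact hM ⟨x, b, by rw [e2]; exact hb, by rw [e2]; exact hg,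
      lt_of_lt_of_le hbp (hf b).2.1⟩
  · have e2 : N x = K.symm x := (Equiv.eq_symm_apply N).1 (hx.symm.trans e)
    exact hN ⟨x, b, by rw [e2]; exact hb, by rw [e2]; exact hg,
      lt_of_lt_of_le hbp (hf b).2.2⟩

/-- **Boy-optimality within the stable matchings pairing `g` with `s`.**
If `s` is a stable husband of girl `g` (some stable matching pairs `g` with
`s`), then among all stable matchings pairing `g` with `s` there is one, `M⋆`,
that simultaneously gives every boy his best possible partner: every boy `b`
weakly prefers his partner in `M⋆` to his partner in any stable matching `M`
with `M g = s`. -/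
theorem exists_boy_optimal_stable_matching_fixing_pair
    (n : ℕ) (hn : 1 ≤ n) (P : PrefProfile n) (g s : Fin n)
    (hs : ∃ M : Fin n ≃ Fin n, IsStableMatching P M ∧ M g = s) :
    ∃ Mstar : Fin n ≃ Fin n, IsStableMatching P Mstar ∧ Mstar g = s ∧
      ∀ M : Fin n ≃ Fin n, IsStableMatching P M → M g = s →
        ∀ b : Fin n, BoyPrefers P b (Mstar.symm b) (M.symm b) ∨ Mstar.symm b = M.symm b := by
  classical
  obtain ⟨M0, h0⟩ := hs
  obtain ⟨S, hS, hmin⟩ := Finset.exists_min_image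
    (Finset.univ.filter fun M : Fin n ≃ Fin n => IsStableMatching P M ∧ M g = s)
    (fun M => ∑ b, (P.2 b (M.symm b) : ℕ)) ⟨M0, by simpa using h0⟩
  simp only [Finset.mem_filter, Finset.mem_univ, true_and] at hS hmin
  refine ⟨S, hS.1, hS.2, fun M hM hMg b => ?_⟩
  obtain ⟨J, hJ, hJor, hJS, hJM⟩ := join_exists P S M hS.1 hM
  have hJg : J g = s := by
    have h1 : S.symm s = g := by rw [← hS.2]; simp
    have h2 : M.symm s = g := by rw [← hMg]; simp
    have h3 : J.symm s = g := by
      rcases hJor s with h | h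
      · rw [h, h1]
      · rw [h, h2]
    rw [← h3]; simp
  have hle := hmin J ⟨hJ, hJg⟩
  have hpt : ∀ c ∈ Finset.univ, (P.2 c (J.symm c) : ℕ) ≤ (P.2 c (S.symm c) : ℕ) :=
    fun c _ => hJS c
  have heq := (Finset.sum_eq_sum_iff_of_le hpt).1 (le_antisymm (Finset.sum_le_sum hpt) hle)
    b (Finset.mem_univ b)
  have hb := hJM b
  rw [Fin.ext heq] at hb
  rcases lt_or_eq_of_le hb with h | h
  · exact Or.inl h
  · exact Or.inr ((P.2 b).injective h)
end

section
/- Fix constants $c$ and $C$ with $0 < c < 1/2$ and $C > 1$. For each $n \geq 1$, consider a uniformly random preference profile for $n$ girls and $n$ boys, and let $H_n$ be the number of stable husbands of a fixed girl (say girl $0$). Then $\Pr\bigl(c \ln n \leq H_n \leq C \ln n\bigr) \to 1$ as $n \to \infty$. -/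
/-- The number of stable husbands of girl `g`: the number of boys `b` such that
some stable matching pairs `g` with `b`. -/
noncomputable def stableHusbandCount (n : ℕ) (P : PrefProfile n) (g : Fin n) : ℕ :=
  Nat.card {b : Fin n // ∃ M : Fin n ≃ Fin n, IsStableMatching P M ∧ M g = b}

namespace SH
open Finset
open scoped Classical

noncomputable def pr {α : Type} [Fintype α] (p : α → Prop) : ℝ :=
  ((univ.filter p).card : ℝ) / (Fintype.card α : ℝ)

section pr
variable {α β : Type} [Fintype α] [Fintype β]

lemma pr_mono {p q : α → Prop} (h : ∀ a, p a → q a) : pr p ≤ pr q := by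
  unfold pr
  gcongr with a
  intro hp
  exact h _ hp

lemma pr_nonneg (p : α → Prop) : 0 ≤ pr p := by unfold pr; positivity

lemma pr_or (p q : α → Prop) : pr (fun a => p a ∨ q a) ≤ pr p + pr q := by
  unfold pr
  rw [← add_div]
  gcongr
  have h1 : (univ.filter (fun a => p a ∨ q a)) ⊆ univ.filter p ∪ univ.filter q := by
    intro a; simp
  have h2 := (Finset.card_le_card h1).trans (Finset.card_union_le _ _)
  rw [← Nat.cast_add]
  refine Nat.cast_le.mpr (le_trans (le_of_eq ?_) h2)
  congr!

lemma pr_not [Nonempty α] (p : α → Prop) : pr p = 1 - pr (fun a => ¬ p a) := by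
  unfold pr
  have h := Finset.card_filter_add_card_filter_not (s := (univ : Finset α)) p
  have hc : (Fintype.card α : ℝ) ≠ 0 := by positivity
  have h' : ((univ.filter p).card : ℝ) + ((univ.filter (fun a => ¬ p a)).card : ℝ) = Fintype.card α := by
    exact_mod_cast h
  rw [eq_sub_iff_add_eq, ← add_div, div_eq_one_iff_eq hc, ← h']
  congr!

lemma pr_exists {ι : Type} (s : Finset ι) (p : ι → α → Prop) (e : ℝ)
    (h : ∀ i ∈ s, pr (p i) ≤ e) : pr (fun a => ∃ i ∈ s, p i a) ≤ s.card * e := by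
  induction s using Finset.induction_on with
  | empty => simp [pr]
  | insert i s hi ih =>
    have h1 : pr (fun a => ∃ j ∈ insert i s, p j a) ≤ pr (fun a => p i a ∨ ∃ j ∈ s, p j a) := by
      apply pr_mono; intro a; simp
    have h2 := pr_or (p i) (fun a => ∃ j ∈ s, p j a)
    have h3 := ih (fun j hj => h j (Finset.mem_insert_of_mem hj))
    have h4 := h i (Finset.mem_insert_self _ _)
    rw [Finset.card_insert_of_notMem hi]; push_cast; linarith

/-- fibre lemma -/
lemma pr_fiber (u : α → β → α) (v : α → β) (h1 : ∀ a b, u (u a b) (v a) = a)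
    (h2 : ∀ a b, v (u a b) = b) [Nonempty α] [Nonempty β] (F : α → Prop) (e : ℝ)
    (h : ∀ a, pr (fun b => F (u a b)) ≤ e) : pr F ≤ e := by
  have hb : (0:ℝ) < Fintype.card β := by positivity
  have key : (Fintype.card β : ℝ) * ((univ.filter F).card : ℝ)
      = ∑ a : α, ((univ.filter (fun b => F (u a b))).card : ℝ) := by
    have e1 : ∑ x : α × β, (if F (u x.1 x.2) then (1:ℝ) else 0)
        = ∑ x : α × β, (if F x.1 then (1:ℝ) else 0) := by
      apply Finset.sum_nbij' (fun x => (u x.1 x.2, v x.1)) (fun x => (u x.1 x.2, v x.1))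
      · simp
      · simp
      · rintro ⟨a, b⟩ _; simp [h1, h2]
      · rintro ⟨a, b⟩ _; simp [h1, h2]
      · rintro ⟨a, b⟩ _; simp
    rw [Fintype.sum_prod_type, Fintype.sum_prod_type] at e1
    have e2 : ∑ a : α, ∑ b : β, (if F a then (1:ℝ) else 0)
        = (Fintype.card β : ℝ) * ((univ.filter F).card : ℝ) := by
      rw [Finset.sum_comm, Finset.sum_const, Finset.sum_boole, nsmul_eq_mul, Finset.card_univ]
    rw [← e2, ← e1]
    refine Finset.sum_congr rfl fun a _ => ?_
    rw [Finset.sum_boole]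
  · have ha : (0:ℝ) < Fintype.card α := by positivity
    unfold pr at *
    rw [div_le_iff₀ ha]
    have : ∑ a : α, ((univ.filter (fun b => F (u a b))).card : ℝ) ≤ ∑ a : α, e * Fintype.card β := by
      apply Finset.sum_le_sum
      intro a _
      have := h a
      rwa [div_le_iff₀ hb] at this
    rw [← key] at this
    simp at this
    nlinarith
end pr

/-! ### records -/
variable {n : ℕ}

def rec (τ : Equiv.Perm (Fin n)) (i : Fin n) : Prop := ∀ j, j < i → τ i < τ j

lemma rec_count (i : Fin n) (T : Equiv.Perm (Fin n) → Prop)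
    (hT : ∀ k, k ≤ i → ∀ τ, T τ → T (τ * Equiv.swap i k)) :
    ((i : ℕ) + 1) * (univ.filter (fun τ => T τ ∧ rec τ i)).card = (univ.filter T).card := by
  have hk : ∀ k ∈ Finset.Iic i, (univ.filter (fun τ => T τ ∧ rec τ i)).card
      = (univ.filter (fun τ : Equiv.Perm (Fin n) => T τ ∧ ∀ j, j ≤ i → τ k ≤ τ j)).card := by
    intro k hk
    rw [Finset.mem_Iic] at hk
    have hswle : ∀ j, j ≤ i → Equiv.swap i k j ≤ i := by
      intro j hj
      by_cases h1 : j = i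
      · subst h1; simpa using hk
      · by_cases h2 : j = k
        · subst h2; simp
        · rw [Equiv.swap_apply_of_ne_of_ne h1 h2]; exact hj
    apply Finset.card_bij' (fun τ _ => τ * Equiv.swap i k) (fun τ _ => τ * Equiv.swap i k)
    · intro τ hτ
      simp only [Finset.mem_filter, Finset.mem_univ, true_and] at hτ ⊢
      refine ⟨hT k hk τ hτ.1, ?_⟩
      intro j hj
      simp only [Equiv.Perm.mul_apply, Equiv.swap_apply_right]
      rcases lt_or_eq_of_le (hswle j hj) with h | h
      · exact (hτ.2 _ h).le
      · rw [h]
    · intro τ hτ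
      simp only [Finset.mem_filter, Finset.mem_univ, true_and] at hτ ⊢
      refine ⟨hT k hk τ hτ.1, ?_⟩
      intro j hj
      simp only [Equiv.Perm.mul_apply, Equiv.swap_apply_left]
      have := hτ.2 _ (hswle j hj.le)
      refine lt_of_le_of_ne this ?_
      intro he
      have := τ.injective he
      have h3 : Equiv.swap i k i = Equiv.swap i k j := by simpa using this
      exact hj.ne' ((Equiv.swap i k).injective h3)
    · intro τ _; simp [mul_assoc]
    · intro τ _; simp [mul_assoc]
  have hsum : ∑ k ∈ Finset.Iic i, (univ.filter (fun τ : Equiv.Perm (Fin n) => T τ ∧ ∀ j, j ≤ i → τ k ≤ τ j)).card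
      = (univ.filter T).card := by
    rw [← Finset.card_biUnion]
    · congr 1
      ext τ
      simp only [Finset.mem_biUnion, Finset.mem_filter, Finset.mem_univ, true_and, Finset.mem_Iic]
      constructor
      · rintro ⟨k, _, h, _⟩; exact h
      · intro h
        obtain ⟨k, hk, hk2⟩ := Finset.exists_min_image (Finset.Iic i) τ ⟨i, by simp⟩
        exact ⟨k, by simpa using hk, h, fun j hj => hk2 j (by simpa using hj)⟩
    · intro k hk k' hk' hne
      rw [Function.onFun, Finset.disjoint_left]
      intro τ h1 h2
      simp only [Finset.mem_filter, Finset.mem_univ, true_and] at h1 h2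
      simp at hk hk'
      exact hne (τ.injective (le_antisymm (h1.2 _ hk') (h2.2 _ hk)))
  rw [← hsum, ← Finset.sum_congr rfl hk]
  simp

lemma rec_one (i : Fin n) :
    ((univ.filter (fun τ : Equiv.Perm (Fin n) => rec τ i)).card : ℝ) = (n.factorial : ℝ) / ((i:ℝ)+1) := by
  have := rec_count i (fun _ => True) (by simp)
  simp [Fintype.card_perm] at this
  rw [eq_div_iff (by positivity)]
  rw [mul_comm]; exact_mod_cast this

lemma rec_two (i j : Fin n) (hij : i < j) :
    ((univ.filter (fun τ : Equiv.Perm (Fin n) => rec τ j ∧ rec τ i)).card : ℝ)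
      = (n.factorial : ℝ) / (((i:ℝ)+1) * ((j:ℝ)+1)) := by
  have := rec_count i (fun τ => rec τ j) (by
    intro k hk τ hτ l hl
    have hj : Equiv.swap i k j = j := Equiv.swap_apply_of_ne_of_ne hij.ne' (lt_of_le_of_lt hk hij).ne'
    simp only [Equiv.Perm.mul_apply, hj]
    apply hτ
    by_cases h1 : l = i
    · subst h1; simpa using lt_of_le_of_lt hk hij
    · by_cases h2 : l = k
      · subst h2; simpa using hij
      · rw [Equiv.swap_apply_of_ne_of_ne h1 h2]; exact hl)
  have h1 := rec_one j
  have h2 : ((i:ℝ)+1) * ((univ.filter (fun τ : Equiv.Perm (Fin n) => rec τ j ∧ rec τ i)).card : ℝ)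
    = ((univ.filter (fun τ : Equiv.Perm (Fin n) => rec τ j)).card : ℝ) := by exact_mod_cast this
  rw [h1] at h2
  field_simp at h2 ⊢
  linarith

noncomputable def recs (S : Finset (Fin n)) (τ : Equiv.Perm (Fin n)) : ℕ := (S.filter (fun i => rec τ i)).card

noncomputable def mu (S : Finset (Fin n)) : ℝ := ∑ i ∈ S, 1 / ((i:ℝ)+1)

lemma mu_nonneg (S : Finset (Fin n)) : 0 ≤ mu S := Finset.sum_nonneg fun i _ => by positivity

lemma recs_eq (S : Finset (Fin n)) (τ : Equiv.Perm (Fin n)) :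
    (recs S τ : ℝ) = ∑ i ∈ S, if rec τ i then (1:ℝ) else 0 := by
  simp [recs]

lemma recs_var (S : Finset (Fin n)) :
    ∑ τ : Equiv.Perm (Fin n), ((recs S τ : ℝ) - mu S)^2 ≤ n.factorial * mu S := by
  have h1 : ∑ τ : Equiv.Perm (Fin n), (recs S τ : ℝ) = n.factorial * mu S := by
    simp_rw [recs_eq]
    rw [Finset.sum_comm, mu, Finset.mul_sum]
    refine Finset.sum_congr rfl fun i _ => ?_
    rw [Finset.sum_boole, rec_one]; ring
  have h2 : ∑ τ : Equiv.Perm (Fin n), (recs S τ : ℝ)^2 ≤ n.factorial * (mu S + mu S ^ 2) := by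
    have : ∀ τ : Equiv.Perm (Fin n), (recs S τ : ℝ)^2
        = ∑ i ∈ S, ∑ j ∈ S, if rec τ i ∧ rec τ j then (1:ℝ) else 0 := by
      intro τ
      rw [sq, recs_eq, Finset.sum_mul_sum]
      refine Finset.sum_congr rfl fun i _ => Finset.sum_congr rfl fun j _ => ?_
      by_cases h : rec τ i <;> by_cases h' : rec τ j <;> simp [h, h']
    simp_rw [this]
    rw [Finset.sum_comm]
    have e : (n.factorial : ℝ) * (mu S + mu S ^ 2) = ∑ i ∈ S, ∑ j ∈ S,
        (n.factorial : ℝ) * ((if i = j then 1 / ((i:ℝ)+1) else 0) + 1 / ((i:ℝ)+1) * (1 / ((j:ℝ)+1))) := by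
      simp_rw [← Finset.mul_sum, Finset.sum_add_distrib, ← Finset.mul_sum]
      rw [sq, mu, Finset.sum_mul]
      simp
    rw [e]
    refine Finset.sum_le_sum fun i hi => ?_
    rw [Finset.sum_comm]
    refine Finset.sum_le_sum fun j hj => ?_
    rw [Finset.sum_boole]
    rcases lt_trichotomy i j with h | h | h
    · have := rec_two i j h
      simp only [h.ne, if_false]
      simp_rw [and_comm] at this ⊢
      rw [this]
      apply le_of_eq; field_simp; simp
    · subst h
      simp only [and_self, if_true, rec_one]
      have : (0:ℝ) ≤ n.factorial * (1 / ((i:ℝ)+1) * (1 / ((i:ℝ)+1))) := by positivity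
      rw [mul_add, mul_one_div]; linarith
    · have := rec_two j i h
      simp only [h.ne', if_false]
      rw [this]
      apply le_of_eq; field_simp; simp
  have h3 : ∑ τ : Equiv.Perm (Fin n), ((recs S τ : ℝ) - mu S)^2
     = ∑ τ : Equiv.Perm (Fin n), (recs S τ : ℝ)^2 - 2 * mu S * ∑ τ : Equiv.Perm (Fin n), (recs S τ : ℝ)
       + n.factorial * mu S ^2 := by
    rw [Finset.mul_sum, ← Finset.sum_sub_distrib]
    have : (n.factorial : ℝ) * mu S ^2 = ∑ τ : Equiv.Perm (Fin n), mu S ^2 := by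
      simp [Fintype.card_perm]
    rw [this, ← Finset.sum_add_distrib]
    refine Finset.sum_congr rfl fun τ _ => by ring
  rw [h3, h1]
  nlinarith

lemma recs_cheb (S : Finset (Fin n)) (a : ℝ) (ha : 0 < a) :
    pr (fun τ : Equiv.Perm (Fin n) => a ≤ |(recs S τ : ℝ) - mu S|) ≤ mu S / a^2 := by
  unfold pr
  rw [Fintype.card_perm, Fintype.card_fin, div_le_div_iff₀ (by positivity) (by positivity)]
  have h := recs_var S
  have h2 : ((univ.filter (fun τ : Equiv.Perm (Fin n) => a ≤ |(recs S τ : ℝ) - mu S|)).card : ℝ) * a^2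
      ≤ ∑ τ : Equiv.Perm (Fin n), ((recs S τ : ℝ) - mu S)^2 := by
    rw [← nsmul_eq_mul, ← Finset.sum_const, Finset.sum_filter]
    refine Finset.sum_le_sum fun τ _ => ?_
    split_ifs with hh
    · rw [← sq_abs (_ - _)]; gcongr
    · positivity
  linarith

end SH


namespace SH
open Finset
open scoped Classical
variable {n : ℕ}

abbrev Pf (n : ℕ) := Fin n → Equiv.Perm (Fin n)

def Held (rj : Fin n → Prop) (G f : Pf n) (p : Fin n → ℕ) (b : Fin n) : Prop :=
  ∃ h, ¬ rj h ∧ (f b h : ℕ) + 1 = p b ∧ ∀ b', (f b' h : ℕ) < p b' → G h b ≤ G h b'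

def AtR (rj : Fin n → Prop) (f : Pf n) (p : Fin n → ℕ) (b : Fin n) : Prop :=
  ∃ h, rj h ∧ (f b h : ℕ) + 1 = p b

noncomputable def pick (S : Fin n → Prop) : Option (Fin n) :=
  if h : ∃ b, S b then some h.choose else none

lemma pick_some {S : Fin n → Prop} {q : Fin n} (h : pick S = some q) : S q := by
  unfold pick at h
  split_ifs at h with h1
  · simp at h; subst h; exact h1.choose_spec

lemma pick_none {S : Fin n → Prop} (h : pick S = none) (b : Fin n) : ¬ S b := by
  unfold pick at h
  split_ifs at h with h1
  · intro hb; exact h1 ⟨b, hb⟩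

noncomputable def sel (rj : Fin n → Prop) (G f : Pf n) (p : Fin n → ℕ) : Option (Fin n) :=
  (pick fun b => ¬ Held rj G f p b ∧ ¬ AtR rj f p b).or (pick fun b => AtR rj f p b)

noncomputable def bump (o : Option (Fin n)) (p : Fin n → ℕ) : Fin n → ℕ :=
  fun b => if o = some b then p b + 1 else p b

noncomputable def st (rj : Fin n → Prop) (G f : Pf n) : ℕ → Fin n → ℕ
  | 0 => fun _ => 0
  | t + 1 => bump (sel rj G f (st rj G f t)) (st rj G f t)

lemma inj' {f : Pf n} {b h h' : Fin n} (e : (f b h : ℕ) = f b h') : h = h' :=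
  (f b).injective (Fin.ext e)

section
variable {rj : Fin n → Prop} {G f : Pf n} {p : Fin n → ℕ} {q b : Fin n}

lemma AtR.not_held (h : AtR rj f p b) : ¬ Held rj G f p b := by
  rintro ⟨h1, a1, a2, _⟩
  obtain ⟨h2, b1, b2⟩ := h
  have : h1 = h2 := inj' (f := f) (b := b) (by omega)
  subst this; exact a1 b1

lemma sel_not_held (h : sel rj G f p = some q) : ¬ Held rj G f p q := by
  unfold sel at h
  rcases Option.or_eq_some_iff.mp h with h | ⟨_, h⟩
  · exact (pick_some h).1
  · exact AtR.not_held (pick_some h)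

lemma sel_atR (h : sel rj G f p = some q) (hq : AtR rj f p q) (b : Fin n) :
    Held rj G f p b ∨ AtR rj f p b := by
  unfold sel at h
  rcases Option.or_eq_some_iff.mp h with h | ⟨h, _⟩
  · exact absurd hq (pick_some h).2
  · have := pick_none h b
    tauto

lemma sel_none (h : sel rj G f p = none) (b : Fin n) : Held rj G f p b := by
  unfold sel at h
  rw [Option.or_eq_none_iff] at h
  have h1 := pick_none h.1 b
  have h2 := pick_none h.2 b
  tauto

lemma all_held (H : ∀ b, Held rj G f p b) (h : Fin n) : ¬ rj h ∧ ∃ b, (f b h : ℕ) + 1 = p b := by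
  choose c h1 h2 h3 using H
  have hinj : Function.Injective c := by
    intro b b' e
    have e1 := h3 b b' (by have := h2 b'; rw [← e] at this; omega)
    have e2 := h3 b' b (by have := h2 b; rw [e] at this; omega)
    rw [← e] at e2
    exact (G (c b)).injective (le_antisymm e1 e2)
  obtain ⟨b, rfl⟩ := (Finite.injective_iff_surjective.mp hinj) h
  exact ⟨h1 b, b, h2 b⟩

lemma st_step (t : ℕ) (b : Fin n) : st rj G f (t+1) b =
    if sel rj G f (st rj G f t) = some b then st rj G f t b + 1 else st rj G f t b := rfl

lemma st_le_succ (t : ℕ) (b : Fin n) : st rj G f t b ≤ st rj G f (t+1) b := by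
  rw [st_step]; split_ifs <;> omega

lemma st_mono {s t : ℕ} (h : s ≤ t) (b : Fin n) : st rj G f s b ≤ st rj G f t b :=
  monotone_nat_of_le_succ (f := fun t => st rj G f t b) (fun t => st_le_succ t b) h

lemma st_sum_step (t : ℕ) : ∑ b, st rj G f (t+1) b =
    ∑ b, st rj G f t b + if sel rj G f (st rj G f t) = none then 0 else 1 := by
  simp_rw [st_step]
  rcases hs : sel rj G f (st rj G f t) with _ | q
  · simp
  · have : ∀ b, (if some q = some b then st rj G f t b + 1 else st rj G f t b)
        = st rj G f t b + if q = b then 1 else 0 := by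
      intro b; simp only [Option.some.injEq]; split_ifs <;> rfl
    simp_rw [this, Finset.sum_add_distrib]
    simp

lemma st_sum_le (t : ℕ) : ∑ b, st rj G f t b ≤ t := by
  induction t with
  | zero => simp [st]
  | succ t ih => rw [st_sum_step]; split_ifs <;> omega

/-- rejected boys -/
lemma rejected (t : ℕ) : ∀ (b h : Fin n), ¬ rj h → (f b h : ℕ) + 1 < st rj G f t b →
    ∃ b', (f b' h : ℕ) < st rj G f t b' ∧ G h b' < G h b := by
  induction t with
  | zero => intro b h _ h2; simp [st] at h2
  | succ t ih =>
    intro b h hr hlt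
    by_cases hc : (f b h : ℕ) + 1 < st rj G f t b
    · obtain ⟨b', h1, h2⟩ := ih b h hr hc
      exact ⟨b', lt_of_lt_of_le h1 (st_le_succ t b'), h2⟩
    · rw [st_step] at hlt
      split_ifs at hlt with hs
      · have hnh := sel_not_held hs
        by_contra hcon
        push Not at hcon
        apply hnh
        refine ⟨h, hr, by omega, ?_⟩
        intro b' hb'
        exact hcon b' (lt_of_lt_of_le hb' (st_le_succ t b'))
      · omega

lemma best_exists (t : ℕ) (h : Fin n) (hr : ¬ rj h) (hp : ∃ b, (f b h : ℕ) < st rj G f t b) :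
    ∃ b, (f b h : ℕ) + 1 = st rj G f t b ∧ ∀ b', (f b' h : ℕ) < st rj G f t b' → G h b ≤ G h b' := by
  obtain ⟨b0, hb0⟩ := hp
  obtain ⟨b, hb, hmin⟩ := Finset.exists_min_image (univ.filter fun b => (f b h : ℕ) < st rj G f t b) (G h)
    ⟨b0, by simpa using hb0⟩
  simp only [Finset.mem_filter, Finset.mem_univ, true_and] at hb hmin
  refine ⟨b, ?_, hmin⟩
  by_contra hne
  obtain ⟨b', h1, h2⟩ := rejected (rj := rj) (G := G) (f := f) t b h hr (by omega)
  exact absurd (hmin b' h1) (not_le.mpr h2)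

end

def Stab (G f : Pf n) (M : Fin n ≃ Fin n) : Prop :=
  ∀ h b, G h b < G h (M h) → f b h < f b (M.symm b) → False

lemma build {f : Pf n} {p : Fin n → ℕ} (c : Fin n → Fin n) (hc : ∀ h, (f (c h) h : ℕ) + 1 = p (c h)) :
    ∃ M : Fin n ≃ Fin n, ∀ h, M h = c h := by
  have hinj : Function.Injective c := by
    intro h h' e
    have h1 := hc h; have h2 := hc h'; rw [← e] at h2
    exact inj' (f := f) (b := c h) (by omega)
  exact ⟨Equiv.ofBijective c (Finite.injective_iff_bijective.mp hinj), fun h => rfl⟩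

/-- no rejecter: completion gives a stable matching. -/
lemma complete_stable (G f : Pf n) (t : ℕ)
    (hcomp : ∀ h, ∃ b, (f b h : ℕ) < st (fun _ => False) G f t b) :
    ∃ M, Stab G f M ∧ ∑ b, (f b (M.symm b) : ℕ) ≤ t := by
  choose c h1 h2 using fun h => best_exists (rj := fun _ => False) (G := G) (f := f) t h (by simp) (hcomp h)
  obtain ⟨M, hM⟩ := build c h1
  have h3 : ∀ b, (f b (M.symm b) : ℕ) + 1 = st (fun _ => False) G f t b := by
    intro b
    have := h1 (M.symm b)
    rw [← hM, M.apply_symm_apply] at this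
    exact this
  refine ⟨M, ?_, ?_⟩
  · intro h b hg hf
    have h4 := h3 b
    have := h2 h b (by have : (f b h : ℕ) < f b (M.symm b) := hf
                       omega)
    rw [← hM] at this
    exact absurd this (not_le.mpr hg)
  · refine le_trans (Finset.sum_le_sum fun b _ => ?_) (st_sum_le (rj := fun _ => False) (G := G) (f := f) t)
    have := h3 b; omega

/-! ### main process -/
section main
variable (G f : Pf n) (g : Fin n)

noncomputable abbrev S (t : ℕ) : Fin n → ℕ := st (fun h => h = g) G f t

def Ev (t : ℕ) (b : Fin n) : Prop :=
  sel (fun h => h = g) G f (S G f g t) = some b ∧ (f b g : ℕ) + 1 = S G f g t b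

variable {G f g}

lemma Ev.atR {t : ℕ} {b : Fin n} (h : Ev G f g t b) : AtR (fun h => h = g) f (S G f g t) b :=
  ⟨g, rfl, h.2⟩

lemma Ev.next {t : ℕ} {b : Fin n} (h : Ev G f g t b) : S G f g (t+1) b = f b g + 2 := by
  have := h.2
  simp only [S] at this ⊢
  rw [st_step, if_pos h.1]
  omega

lemma Ev.uniq {s t : ℕ} {b : Fin n} (h : Ev G f g s b) (h' : Ev G f g t b) : s = t := by
  by_contra hne
  wlog hlt : s < t generalizing s t
  · exact this h' h (Ne.symm hne) (by omega)
  have h1 := h.next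
  have h2 := h'.2
  have h3 := st_mono (rj := fun h => h = g) (G := G) (f := f) (s := s+1) (t := t) hlt b
  simp only [S] at *
  omega

lemma Ev.inj {t : ℕ} {b b' : Fin n} (h : Ev G f g t b) (h' : Ev G f g t b') : b = b' := by
  have := h.1.symm.trans h'.1
  simpa using this

lemma ev_of_passed (t : ℕ) (b : Fin n) (h : (f b g : ℕ) + 1 < S G f g t b) : ∃ s < t, Ev G f g s b := by
  induction t with
  | zero => simp [S, st] at h
  | succ t ih =>
    by_cases hc : (f b g : ℕ) + 1 < S G f g t b
    · obtain ⟨s, h1, h2⟩ := ih hc; exact ⟨s, by omega, h2⟩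
    · simp only [S] at h hc
      rw [st_step] at h
      split_ifs at h with hs
      · exact ⟨t, by omega, hs, by simp only [S]; omega⟩
      · omega

lemma S_sum (t : ℕ) : ∑ b, S G f g t b = t := by
  induction t with
  | zero => simp [S, st]
  | succ t ih =>
    simp only [S] at ih ⊢
    rw [st_sum_step, ih, if_neg]
    intro hn
    exact (all_held (sel_none hn) g).1 rfl

lemma stable_event (M : Fin n ≃ Fin n) (hM : Stab G f M) :
    ∃ t, Ev G f g t (M g) ∧ ∀ s < t, ∀ b, Ev G f g s b → G g (M g) < G g b := by
  set r : Fin n → ℕ := fun b => f b (M.symm b) + 1 with hr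
  have hex : ∃ t, ¬ ∀ b, S G f g t b ≤ r b := by
    refine ⟨∑ b, r b + 1, fun hle => ?_⟩
    have := Finset.sum_le_sum fun b (_ : b ∈ univ) => hle b
    rw [S_sum] at this
    omega
  have hmin := fun s => Nat.find_min (m := s) hex
  have hsp := Nat.find_spec hex
  rcases ht : Nat.find hex with _ | t
  · rw [ht] at hsp; exact absurd (fun b => by simp [S, st]) hsp
  rw [ht] at hsp hmin
  have hle : ∀ s ≤ t, ∀ b, S G f g s b ≤ r b := fun s hs => not_not.mp (hmin s (by omega))
  push Not at hsp
  obtain ⟨q, hq⟩ := hsp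
  have hq0 := hle t le_rfl q
  have hev : Ev G f g t (M g) := by
    have hq' := hq
    simp only [S] at hq hq0
    rw [st_step] at hq
    split_ifs at hq with hs
    swap
    · omega
    have hqe : st (fun h => h = g) G f t q = f q (M.symm q) + 1 := by simp only [hr] at *; omega
    have hnh := sel_not_held hs
    have : M.symm q = g := by
      by_contra hne
      apply hnh
      refine ⟨M.symm q, hne, hqe.symm, ?_⟩
      intro b' hb'
      by_contra hlt
      push Not at hlt
      apply hM (M.symm q) b' (by simpa using hlt)
      have h1 := hle t le_rfl b'
      simp only [S, hr] at h1
      have h2 : (f b' (M.symm q) : ℕ) ≤ f b' (M.symm b') := by omega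
      refine lt_of_le_of_ne h2 ?_
      intro e
      have := (f b').injective e
      have := M.symm.injective this
      subst this
      exact lt_irrefl _ hlt
    have hqM : q = M g := by rw [← this]; simp
    subst hqM
    refine ⟨hs, ?_⟩
    simp only [S]; rw [hqe, this]
  refine ⟨t, hev, ?_⟩
  intro s hs b hb
  by_contra hcon
  have hne : b ≠ M g := by
    rintro rfl
    have := hb.uniq hev; omega
  have hlt : G g b < G g (M g) := lt_of_le_of_ne (not_lt.mp hcon) (fun e => hne ((G g).injective e))
  apply hM g b hlt
  have h1 := hb.next
  have h2 := hle (s+1) (by omega) b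
  simp only [hr] at h2
  show (f b g : ℕ) < _
  omega

lemma event_stable (t : ℕ) (β : Fin n) (hev : Ev G f g t β)
    (hcomp : ∀ h, h ≠ g → ∃ b, (f b h : ℕ) < S G f g t b)
    (hrec : ∀ s < t, ∀ b, Ev G f g s b → G g β < G g b) :
    ∃ M, Stab G f M ∧ M g = β := by
  have hc : ∀ h, ∃ b, ((f b h : ℕ) + 1 = S G f g t b) ∧ (h = g → b = β) ∧
      (h ≠ g → ∀ b', (f b' h : ℕ) < S G f g t b' → G h b ≤ G h b') := by
    intro h
    by_cases hh : h = g
    · subst hh; exact ⟨β, hev.2, fun _ => rfl, fun h => absurd rfl h⟩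
    · obtain ⟨b, h1, h2⟩ := best_exists (rj := fun h => h = g) (G := G) (f := f) t h hh (hcomp h hh)
      exact ⟨b, h1, fun h => absurd h hh, fun _ => h2⟩
  choose c h1 h2 h3 using hc
  obtain ⟨M, hM⟩ := build c h1
  have h4 : ∀ b, (f b (M.symm b) : ℕ) + 1 = S G f g t b := by
    intro b
    have := h1 (M.symm b)
    rw [← hM, M.apply_symm_apply] at this
    exact this
  refine ⟨M, ?_, by rw [hM, h2 g rfl]⟩
  intro h b hg hf
  have h5 := h4 b
  have hf' : (f b h : ℕ) < f b (M.symm b) := hf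
  rw [hM] at hg
  by_cases hh : h = g
  · subst hh
    rw [h2 h rfl] at hg
    obtain ⟨s, hs, he⟩ := ev_of_passed (G := G) (f := f) (g := h) t b (by omega)
    exact absurd (hrec s hs b he) (not_lt.mpr hg.le)
  · exact absurd (h3 h hh b (by omega)) (not_le.mpr hg)

variable (G f g)
noncomputable def key (b : Fin n) : ℕ∞ := if h : ∃ s, Ev G f g s b then (h.choose : ℕ∞) else ⊤

noncomputable def sg : Equiv.Perm (Fin n) := Tuple.sort (key G f g)
variable {G f g}

lemma key_ev {s : ℕ} {b : Fin n} (h : Ev G f g s b) : key G f g b = s := by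
  have h' : ∃ s, Ev G f g s b := ⟨s, h⟩
  rw [key, dif_pos h', h'.choose_spec.uniq h]

lemma ev_key {s : ℕ} {b : Fin n} (h : key G f g b = s) : Ev G f g s b := by
  unfold key at h
  split_ifs at h with h1
  · have : h1.choose = s := by exact_mod_cast h
    rw [← this]; exact h1.choose_spec
  · exact absurd h.symm (ENat.natCast_ne_top s)

lemma sg_mono {i j : Fin n} (h : i ≤ j) : key G f g (sg G f g i) ≤ key G f g (sg G f g j) :=
  Tuple.monotone_sort (key G f g) h

/-- positions before an event position are earlier events -/
lemma before_ev {i j : Fin n} {t : ℕ} (hij : j < i) (hi : Ev G f g t (sg G f g i)) :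
    ∃ s < t, Ev G f g s (sg G f g j) := by
  have h := sg_mono (G := G) (f := f) (g := g) hij.le
  rw [key_ev hi] at h
  obtain ⟨s, hs⟩ := ENat.ne_top_iff_exists.mp (ne_top_of_le_ne_top (ENat.natCast_ne_top t) h)
  have he := ev_key hs.symm
  rw [← hs] at h
  have h' : s ≤ t := by exact_mod_cast h
  refine ⟨s, lt_of_le_of_ne h' ?_, he⟩
  rintro rfl
  exact hij.ne ((sg G f g).injective (he.inj hi))

lemma before_ev' {i : Fin n} {b : Fin n} {s t : ℕ} (hi : Ev G f g t (sg G f g i)) (hb : Ev G f g s b)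
    (hst : s < t) : (sg G f g).symm b < i := by
  by_contra hcon
  have h := sg_mono (G := G) (f := f) (g := g) (not_lt.mp hcon)
  rw [key_ev hi, Equiv.apply_symm_apply, key_ev hb] at h
  have : t ≤ s := by exact_mod_cast h
  omega

/-- upper bound -/
lemma stable_rec (M : Fin n ≃ Fin n) (hM : Stab G f M) :
    rec (G g * sg G f g) ((sg G f g).symm (M g)) := by
  obtain ⟨t, h1, h2⟩ := stable_event (g := g) M hM
  intro j hj
  simp only [Equiv.Perm.mul_apply, Equiv.apply_symm_apply]
  obtain ⟨s, hs, he⟩ := before_ev (G := G) (f := f) (g := g) (t := t) hj (by simpa using h1)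
  exact h2 s hs _ he

/-- lower bound -/
lemma rec_stable {m D : ℕ} (hcomp : ∀ h, h ≠ g → ∃ b, (f b h : ℕ) < S G f g m b)
    (hD : (univ.filter fun b => (f b g : ℕ) < S G f g m b).card ≤ D)
    (M0 : Fin n ≃ Fin n) (hM0 : Stab G f M0) (i : Fin n) (hDi : D ≤ i)
    (hi : i ≤ (sg G f g).symm (M0 g)) (hrec : rec (G g * sg G f g) i) :
    ∃ M, Stab G f M ∧ M g = sg G f g i := by
  obtain ⟨t0, h1, -⟩ := stable_event (g := g) M0 hM0
  have : ∃ t, Ev G f g t (sg G f g i) := by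
    rcases lt_or_eq_of_le hi with hlt | heq
    · obtain ⟨s, _, hs⟩ := before_ev (G := G) (f := f) (g := g) (t := t0) hlt (by simpa using h1)
      exact ⟨s, hs⟩
    · rw [heq]; exact ⟨t0, by simpa using h1⟩
  obtain ⟨t, ht⟩ := this
  have hmt : m ≤ t := by
    by_contra hlt
    push Not at hlt
    have hsub : (Finset.Iic i).map (sg G f g).toEmbedding ⊆ (univ.filter fun b => (f b g : ℕ) < S G f g m b) := by
      intro b hb
      simp only [Finset.mem_map, Finset.mem_Iic, Equiv.coe_toEmbedding] at hb
      obtain ⟨j, hj, rfl⟩ := hb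
      have : ∃ s ≤ t, Ev G f g s (sg G f g j) := by
        rcases lt_or_eq_of_le hj with hlt | heq
        · obtain ⟨s, h1, h2⟩ := before_ev hlt ht
          exact ⟨s, h1.le, h2⟩
        · rw [heq]; exact ⟨t, le_rfl, ht⟩
      obtain ⟨s, hs, he⟩ := this
      have h2 := he.2
      have h3 := st_mono (rj := fun h => h = g) (G := G) (f := f) (s := s) (t := m) (by omega) (sg G f g j)
      simp only [Finset.mem_filter, Finset.mem_univ, true_and]
      simp only [S] at *
      omega
    have := (Finset.card_le_card hsub).trans hD
    simp at this
    omega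
  refine event_stable t _ ht ?_ ?_
  · intro h hh
    obtain ⟨b, hb⟩ := hcomp h hh
    exact ⟨b, lt_of_lt_of_le hb (st_mono hmt b)⟩
  · intro s hs b hb
    have := hrec _ (before_ev' ht hb hs)
    simpa using this

lemma held_congr {rj : Fin n → Prop} {G G' f : Pf n} (h : ∀ x, ¬ rj x → G x = G' x) :
    Held rj G f = Held rj G' f := by
  funext p b
  simp only [Held, eq_iff_iff]
  constructor
  · rintro ⟨x, h1, h2, h3⟩; exact ⟨x, h1, h2, by rw [← h x h1]; exact h3⟩
  · rintro ⟨x, h1, h2, h3⟩; exact ⟨x, h1, h2, by rw [h x h1]; exact h3⟩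

lemma S_congr {G G' f : Pf n} {g : Fin n} (h : ∀ x, x ≠ g → G x = G' x) : S G f g = S G' f g := by
  have hs : sel (fun h => h = g) G f = sel (fun h => h = g) G' f := by
    funext p; unfold sel; rw [held_congr h]
  funext t
  induction t with
  | zero => rfl
  | succ t ih => simp only [S] at *; simp only [st]; rw [ih, hs]

lemma sg_congr {G G' f : Pf n} {g : Fin n} (h : ∀ x, x ≠ g → G x = G' x) : sg G f g = sg G' f g := by
  have hs : sel (fun h => h = g) G f = sel (fun h => h = g) G' f := by
    funext p; unfold sel; rw [held_congr h]
  have : Ev G f g = Ev G' f g := by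
    unfold Ev; rw [hs, S_congr h]
  unfold sg key
  rw [this]

end main
end SH


namespace SH
open Finset
open scoped Classical
variable {n : ℕ}

section loc
variable {rj : Fin n → Prop} {G f f' : Pf n}

lemma agree_symm {p : Fin n → ℕ} (h : ∀ b x, (f b x : ℕ) < p b → f' b x = f b x) :
    ∀ b x, (f' b x : ℕ) < p b → f b x = f' b x := by
  intro b x hx
  have h1 := h b ((f b).symm (f' b x)) (by simpa using hx)
  simp only [Equiv.apply_symm_apply] at h1
  have h2 := (f' b).injective h1
  exact ((Equiv.symm_apply_eq _).mp h2).symm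

lemma atR_local {p : Fin n → ℕ} (h : ∀ b x, (f b x : ℕ) < p b → f' b x = f b x) (b : Fin n)
    (hh : AtR rj f p b) : AtR rj f' p b := by
  obtain ⟨x, h1, h2⟩ := hh
  exact ⟨x, h1, by rw [h b x (by omega)]; exact h2⟩

lemma held_local {p : Fin n → ℕ} (h : ∀ b x, (f b x : ℕ) < p b → f' b x = f b x) (b : Fin n)
    (hh : Held rj G f p b) : Held rj G f' p b := by
  obtain ⟨x, h1, h2, h3⟩ := hh
  refine ⟨x, h1, by rw [h b x (by omega)]; exact h2, ?_⟩
  intro b' hb'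
  apply h3
  rw [agree_symm h b' x hb']; exact hb'

lemma sel_local {p : Fin n → ℕ} (h : ∀ b x, (f b x : ℕ) < p b → f' b x = f b x) :
    sel rj G f' p = sel rj G f p := by
  have e1 : Held rj G f' p = Held rj G f p := by
    funext b; exact propext ⟨held_local (agree_symm h) b, held_local h b⟩
  have e2 : AtR rj f' p = AtR rj f p := by
    funext b; exact propext ⟨atR_local (agree_symm h) b, atR_local h b⟩
  unfold sel
  rw [e1, e2]

lemma st_local (t : ℕ) (h : ∀ b x, (f b x : ℕ) < st rj G f t b → f' b x = f b x) :
    st rj G f' t = st rj G f t := by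
  induction t with
  | zero => rfl
  | succ t ih =>
    have h' : ∀ b x, (f b x : ℕ) < st rj G f t b → f' b x = f b x :=
      fun b x hx => h b x (lt_of_lt_of_le hx (st_le_succ t b))
    simp only [st]
    rw [ih h', sel_local h']
end loc

noncomputable def sw (f : Pf n) (q x y : Fin n) : Pf n := Function.update f q (f q * Equiv.swap x y)

lemma sw_sw (f : Pf n) (q x y : Fin n) : sw (sw f q x y) q x y = f := by
  unfold sw
  simp [mul_assoc]

lemma sw_comm (f : Pf n) (q x y : Fin n) : sw f q x y = sw f q y x := by
  unfold sw; rw [Equiv.swap_comm]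

lemma sw_left (f : Pf n) (q x y : Fin n) : sw f q x y q x = f q y := by simp [sw]
lemma sw_right (f : Pf n) (q x y : Fin n) : sw f q x y q y = f q x := by simp [sw]

lemma sw_agree {f : Pf n} {q x y : Fin n} {p : Fin n → ℕ} (hx : p q ≤ f q x) (hy : p q ≤ f q y) :
    ∀ b z, (f b z : ℕ) < p b → sw f q x y b z = f b z := by
  intro b z hz
  unfold sw
  by_cases hb : b = q
  · subst hb
    have h1 : z ≠ x := by rintro rfl; omega
    have h2 : z ≠ y := by rintro rfl; omega
    simp [Equiv.swap_apply_of_ne_of_ne h1 h2]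
  · simp [hb]

section prob
variable (rj : Fin n → Prop) (G : Pf n)

def U (h0 : Fin n) (t : ℕ) (f : Pf n) : Prop := ∀ b, ¬ ((f b h0 : ℕ) < st rj G f t b)

lemma U_sel {h0 : Fin n} {t : ℕ} {f : Pf n} (hU : U rj G h0 t f) :
    ∃ x : Fin n × Fin n, sel rj G f (st rj G f t) = some x.1 ∧ (f x.1 x.2 : ℕ) = st rj G f t x.1 := by
  rcases hs : sel rj G f (st rj G f t) with _ | q
  · obtain ⟨-, b, hb⟩ := all_held (sel_none hs) h0
    exact absurd (show (f b h0 : ℕ) < st rj G f t b by omega) (hU b)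
  · have h1 := hU q
    have : st rj G f t q < n := by have := (f q h0).isLt; omega
    exact ⟨(q, (f q).symm ⟨_, this⟩), rfl, by simp⟩

lemma U_card (h0 : Fin n) (t : ℕ) : (univ.filter (U rj G h0 t)).card
    ≤ (univ.filter (fun f => U rj G h0 t f ∧ ¬ U rj G h0 (t+1) f)).card * n := by
  have hch : ∀ f, ∃ x : Fin n × Fin n, U rj G h0 t f →
      (sel rj G f (st rj G f t) = some x.1 ∧ (f x.1 x.2 : ℕ) = st rj G f t x.1) := by
    intro f
    by_cases h : U rj G h0 t f
    · obtain ⟨x, hx⟩ := U_sel rj G h; exact ⟨x, fun _ => hx⟩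
    · exact ⟨(h0, h0), fun h' => absurd h' h⟩
  choose x hx using hch
  have hst : ∀ f, U rj G h0 t f → st rj G (sw f (x f).1 (x f).2 h0) t = st rj G f t := by
    intro f hf
    apply st_local
    apply sw_agree
    · rw [(hx f hf).2]
    · exact not_lt.mp (hf _)
  have hsel : ∀ f, U rj G h0 t f → sel rj G (sw f (x f).1 (x f).2 h0) (st rj G f t) = some (x f).1 := by
    intro f hf
    rw [← (hx f hf).1]
    apply sel_local
    apply sw_agree
    · rw [(hx f hf).2]
    · exact not_lt.mp (hf _)
  have : (univ.filter (fun f => U rj G h0 t f ∧ ¬ U rj G h0 (t+1) f)).card * n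
      = ((univ.filter (fun f => U rj G h0 t f ∧ ¬ U rj G h0 (t+1) f)) ×ˢ (univ : Finset (Fin n))).card := by
    simp [Finset.card_product]
  rw [this]
  apply Finset.card_le_card_of_injOn (fun f => (sw f (x f).1 (x f).2 h0, (x f).2))
  · intro f hf
    simp only [Finset.coe_filter, Finset.mem_univ, true_and, Set.mem_ofPred_eq] at hf
    simp only [Finset.coe_product, Set.mem_prod, Finset.coe_filter, Finset.mem_univ, true_and,
      Set.mem_ofPred_eq, Finset.coe_univ, Set.mem_univ, and_true]
    constructor
    · intro b
      rw [hst f hf]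
      by_cases hb : b = (x f).1
      · subst hb
        rw [sw_right, (hx f hf).2]; omega
      · have : sw f (x f).1 (x f).2 h0 b = f b := by simp [sw, hb]
        rw [this]; exact hf b
    · intro hU
      apply hU (x f).1
      rw [st_step, hst f hf, hsel f hf, if_pos rfl, sw_right, (hx f hf).2]
      omega
  · intro f hf f' hf' he
    simp only [Finset.coe_filter, Finset.mem_univ, true_and, Set.mem_ofPred_eq] at hf hf'
    simp only [Prod.mk.injEq] at he
    obtain ⟨h1, h2⟩ := he
    have h3 := hst f hf
    have h4 := hsel f hf
    rw [h1, hst f' hf'] at h3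
    rw [h1, ← h3, hsel f' hf'] at h4
    have h5 : (x f').1 = (x f).1 := by simpa using h4
    rw [← sw_sw f (x f).1 (x f).2 h0, h1, h2, ← h5, sw_sw]

lemma U_pr (h0 : Fin n) (t : ℕ) : pr (U rj G h0 t) ≤ (1 - 1 / (n:ℝ))^t := by
  have hn : 0 < n := h0.pos
  have hn' : (0:ℝ) < n := by exact_mod_cast hn
  have hn1 : 1 / (n:ℝ) ≤ 1 := by
    rw [div_le_one hn']; exact_mod_cast hn
  have hT : (0:ℝ) < Fintype.card (Pf n) := by
    have : 0 < Fintype.card (Pf n) := Fintype.card_pos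
    exact_mod_cast this
  induction t with
  | zero =>
    unfold pr
    rw [div_le_iff₀ hT]
    simp only [pow_zero, one_mul, Nat.cast_le]
    exact Finset.card_le_univ _
  | succ t ih =>
    have h1 := U_card rj G h0 t
    have h2 : (univ.filter (U rj G h0 (t+1))).card +
      (univ.filter (fun f => U rj G h0 t f ∧ ¬ U rj G h0 (t+1) f)).card
        = (univ.filter (U rj G h0 t)).card := by
      rw [← Finset.card_union_of_disjoint]
      · congr 1
        ext f
        simp only [Finset.mem_union, Finset.mem_filter, Finset.mem_univ, true_and]
        have : U rj G h0 (t+1) f → U rj G h0 t f :=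
          fun h b hb => h b (lt_of_lt_of_le hb (st_le_succ t b))
        tauto
      · rw [Finset.disjoint_left]
        intro f; simp only [Finset.mem_filter, Finset.mem_univ, true_and]; tauto
    have h1' : ((univ.filter (U rj G h0 t)).card : ℝ) ≤
      ((univ.filter (fun f => U rj G h0 t f ∧ ¬ U rj G h0 (t+1) f)).card : ℝ) * n := by exact_mod_cast h1
    have h2' : ((univ.filter (U rj G h0 (t+1))).card : ℝ) +
      ((univ.filter (fun f => U rj G h0 t f ∧ ¬ U rj G h0 (t+1) f)).card : ℝ)
        = ((univ.filter (U rj G h0 t)).card : ℝ) := by exact_mod_cast h2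
    have h3 : pr (U rj G h0 (t+1)) ≤ (1 - 1/(n:ℝ)) * pr (U rj G h0 t) := by
      unfold pr
      rw [← mul_div_assoc]
      gcongr
      rw [← div_le_iff₀ hn'] at h1'
      have : (1 - 1/(n:ℝ)) * ((univ.filter (U rj G h0 t)).card : ℝ) = ((univ.filter (U rj G h0 t)).card : ℝ)
        - ((univ.filter (U rj G h0 t)).card : ℝ) / n := by ring
      rw [this]; linarith
    calc _ ≤ _ := h3
      _ ≤ (1 - 1/(n:ℝ)) * (1 - 1/(n:ℝ))^t := by
        gcongr
      _ = _ := by ring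

/-- completion w.h.p. -/
lemma comp_pr (k : ℕ) (hn : 0 < n) : pr (fun f => ¬ ∀ h, ∃ b, (f b h : ℕ) < st rj G f (n*k) b)
    ≤ n * Real.exp (-(k:ℝ)) := by
  have h0 : pr (fun f => ¬ ∀ h, ∃ b, (f b h : ℕ) < st rj G f (n*k) b)
     ≤ pr (fun f => ∃ h ∈ (univ : Finset (Fin n)), U rj G h (n*k) f) := by
    apply pr_mono
    intro f hf
    push Not at hf
    obtain ⟨h, hh⟩ := hf
    exact ⟨h, by simp, fun b => not_lt.mpr (hh b)⟩
  refine h0.trans ((pr_exists univ _ (Real.exp (-(k:ℝ))) ?_).trans (by simp))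
  intro h _
  refine (U_pr rj G h _).trans ?_
  have hn' : (0:ℝ) < n := by exact_mod_cast hn
  have h1 : 1 - 1/(n:ℝ) ≤ Real.exp (-(1/(n:ℝ))) := by
    have := Real.add_one_le_exp (-(1/(n:ℝ))); linarith
  have hn1 : 1 / (n:ℝ) ≤ 1 := by
    rw [div_le_one hn']; exact_mod_cast hn
  calc (1 - 1/(n:ℝ))^(n*k) ≤ (Real.exp (-(1/(n:ℝ))))^(n*k) := by gcongr
    _ = Real.exp (-(k:ℝ)) := by
      rw [← Real.exp_nat_mul]; congr 1; push_cast; field_simp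

def V (g : Fin n) (s t : ℕ) (f : Pf n) : Prop :=
  ∃ q, sel rj G f (st rj G f t) = some q ∧ (f q g : ℕ) = st rj G f t q ∧ st rj G f t q < s

lemma V_card (g : Fin n) (s t : ℕ) (hs : s ≤ n) :
    (univ.filter (V rj G g s t)).card * (n - s) ≤ Fintype.card (Pf n) := by
  have hch : ∀ f, ∃ q, V rj G g s t f →
      (sel rj G f (st rj G f t) = some q ∧ (f q g : ℕ) = st rj G f t q ∧ st rj G f t q < s) := by
    intro f
    by_cases h : V rj G g s t f
    · obtain ⟨q, hq⟩ := h; exact ⟨q, fun _ => hq⟩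
    · exact ⟨g, fun h' => absurd h' h⟩
  choose q hq using hch
  have hcard : (univ.filter (fun k : Fin n => s ≤ k)).card = n - s := by
    have : (univ.filter (fun k : Fin n => s ≤ k)).card = ((Finset.range n).filter (fun k => s ≤ k)).card := by
      rw [← Finset.card_map Fin.valEmbedding]
      congr 1
      ext k
      simp only [Finset.mem_map, Finset.mem_filter, Finset.mem_univ, true_and, Fin.valEmbedding_apply, Finset.mem_range]
      constructor
      · rintro ⟨a, h, rfl⟩; exact ⟨a.isLt, h⟩
      · rintro ⟨h1, h2⟩; exact ⟨⟨k, h1⟩, h2, rfl⟩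
    rw [this]
    have : (Finset.range n).filter (fun k => s ≤ k) = Finset.Ico s n := by
      ext k; simp; tauto
    rw [this]; simp
  rw [← hcard, ← Finset.card_product]
  rw [← Finset.card_univ (α := Pf n)]
  have hag : ∀ f k, V rj G g s t f → s ≤ ((k : Fin n) : ℕ) →
      ∀ b z, (f b z : ℕ) < st rj G f t b → sw f (q f) g ((f (q f)).symm k) b z = f b z := by
    intro f k hf hk
    obtain ⟨h1, h2, h3⟩ := hq f hf
    apply sw_agree
    · omega
    · simp; omega
  apply Finset.card_le_card_of_injOn (fun x => sw x.1 (q x.1) g ((x.1 (q x.1)).symm x.2))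
  · intro x _; simp
  · rintro ⟨f, k⟩ hx ⟨f', k'⟩ hx' he
    simp only [Finset.coe_product, Set.mem_prod, Finset.coe_filter, Finset.mem_univ, true_and,
      Set.mem_ofPred_eq] at hx hx' he
    have a1 := st_local t (hag f k hx.1 hx.2)
    have a2 := st_local t (hag f' k' hx'.1 hx'.2)
    have b1 := sel_local (rj := rj) (G := G) (hag f k hx.1 hx.2)
    have b2 := sel_local (rj := rj) (G := G) (hag f' k' hx'.1 hx'.2)
    rw [(hq f hx.1).1, ← a1, he, a2, b2, (hq f' hx'.1).1] at b1
    have hqq : q f' = q f := by simpa using b1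
    rw [he, a2] at a1
    have c1 := sw_right f (q f) g ((f (q f)).symm k)
    have c2 := sw_right f' (q f') g ((f' (q f')).symm k')
    have d1 := (hq f hx.1).2.1
    have d2 := (hq f' hx'.1).2.1
    have hy : (f (q f)).symm k = (f' (q f')).symm k' := by
      apply inj' (f := sw f (q f) g ((f (q f)).symm k)) (b := q f)
      rw [c1, d1, he, ← hqq, c2, d2, a1]
    have hff : f = f' := by
      rw [← sw_sw f (q f) g ((f (q f)).symm k), he, hy, ← hqq, sw_sw]
    subst hff
    simp at hy
    rw [hy]

lemma hits (g : Fin n) (s m : ℕ) (f : Pf n) :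
    (univ.filter fun b => (f b g : ℕ) < st rj G f m b).card
      ≤ ((Finset.range m).filter fun t => V rj G g s t f).card + (univ.filter fun b => s < st rj G f m b).card := by
  have hev : ∀ t b, (f b g : ℕ) < st rj G f t b → ∃ u < t, sel rj G f (st rj G f u) = some b ∧
      (f b g : ℕ) = st rj G f u b := by
    intro t b
    induction t with
    | zero => intro h; simp [st] at h
    | succ t ih =>
      intro h
      by_cases hc : (f b g : ℕ) < st rj G f t b
      · obtain ⟨u, h1, h2⟩ := ih hc; exact ⟨u, by omega, h2⟩
      · rw [st_step] at h
        split_ifs at h with hs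
        · exact ⟨t, by omega, hs, by omega⟩
        · omega
  have hsub : (univ.filter fun b => (f b g : ℕ) < st rj G f m b) ⊆
      (univ.filter fun b => ∃ t < m, sel rj G f (st rj G f t) = some b ∧ V rj G g s t f) ∪
      (univ.filter fun b => s < st rj G f m b) := by
    intro b hb
    simp only [Finset.mem_union, Finset.mem_filter, Finset.mem_univ, true_and] at hb ⊢
    by_cases hc : s < st rj G f m b
    · exact Or.inr hc
    · left
      obtain ⟨u, h1, h2, h3⟩ := hev m b hb
      exact ⟨u, h1, h2, b, h2, h3, by omega⟩
  refine (Finset.card_le_card hsub).trans ((Finset.card_union_le _ _).trans ?_)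
  gcongr
  have hch : ∀ b, ∃ t, (∃ t < m, sel rj G f (st rj G f t) = some b ∧ V rj G g s t f) →
      (t < m ∧ sel rj G f (st rj G f t) = some b ∧ V rj G g s t f) := by
    intro b
    by_cases h : ∃ t < m, sel rj G f (st rj G f t) = some b ∧ V rj G g s t f
    · obtain ⟨t, ht⟩ := h; exact ⟨t, fun _ => ht⟩
    · exact ⟨0, fun h' => absurd h' h⟩
  choose T hT using hch
  apply Finset.card_le_card_of_injOn T
  · intro b hb
    simp only [Finset.coe_filter, Finset.mem_univ, true_and, Set.mem_ofPred_eq] at hb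
    have := hT b hb
    simp [this]
  · intro b hb b' hb' he
    simp only [Finset.coe_filter, Finset.mem_univ, true_and, Set.mem_ofPred_eq] at hb hb'
    have h1 := (hT b hb).2.1
    have h2 := (hT b' hb').2.1
    rw [he, h2] at h1
    simpa using h1.symm

lemma hits_pr (g : Fin n) (k : ℕ) (hk : 0 < k) (hn : 2 ≤ n) :
    pr (fun f => ¬ (univ.filter fun b => (f b g : ℕ) < st rj G f (n*k) b).card ≤ k^2 + 3*k) ≤ 2 / k := by
  have hT : (0:ℝ) < Fintype.card (Pf n) := by
    have : 0 < Fintype.card (Pf n) := Fintype.card_pos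
    exact_mod_cast this
  have hk' : (0:ℝ) < k := by exact_mod_cast hk
  have h1 : pr (fun f => ¬ (univ.filter fun b => (f b g : ℕ) < st rj G f (n*k) b).card ≤ k^2 + 3*k)
      ≤ pr (fun f => k^2 ≤ ((Finset.range (n*k)).filter fun t => V rj G g (n/2) t f).card) := by
    apply pr_mono
    intro f hf
    by_contra hcon
    apply hf
    refine (hits rj G g (n/2) (n*k) f).trans ?_
    have h2 : (univ.filter fun b => n/2 < st rj G f (n*k) b).card ≤ 3*k := by
      by_contra hlt
      push Not at hlt
      have h3 := st_sum_le (rj := rj) (G := G) (f := f) (n*k)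
      have h4 : (univ.filter fun b => n/2 < st rj G f (n*k) b).card * (n/2) ≤ ∑ b, st rj G f (n*k) b := by
        rw [← smul_eq_mul, ← Finset.sum_const]
        refine (Finset.sum_le_sum (g := fun b => st rj G f (n*k) b) ?_).trans
          (Finset.sum_le_sum_of_subset (Finset.filter_subset _ _))
        intro b hb
        simp only [Finset.mem_filter] at hb
        exact hb.2.le
      have h5 : (3*k+1) * (n/2) ≤ n*k := le_trans (Nat.mul_le_mul_right _ hlt) (h4.trans h3)
      have h6 : n ≤ 3*(n/2) := by omega
      have h7 : n/2 ≥ 1 := by omega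
      nlinarith
    omega
  refine h1.trans ?_
  obtain ⟨W, hW⟩ : ∃ W : Pf n → Prop, W = (fun f => k^2 ≤ ((Finset.range (n*k)).filter fun t => V rj G g (n/2) t f).card) := ⟨_, rfl⟩
  rw [← hW]
  unfold pr
  rw [div_le_div_iff₀ hT hk']
  set A := univ.filter W with hA
  have h2 : A.card * k^2 ≤ ∑ f : Pf n, ((Finset.range (n*k)).filter fun t => V rj G g (n/2) t f).card := by
    rw [← smul_eq_mul, ← Finset.sum_const]
    refine (Finset.sum_le_sum (g := fun f => ((Finset.range (n*k)).filter fun t => V rj G g (n/2) t f).card) ?_).trans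
          (Finset.sum_le_sum_of_subset (Finset.filter_subset _ _))
    intro f hf
    rw [hA, Finset.mem_filter, hW] at hf
    exact hf.2
  have h3 : ∑ f : Pf n, ((Finset.range (n*k)).filter fun t => V rj G g (n/2) t f).card
      = ∑ t ∈ Finset.range (n*k), (univ.filter (V rj G g (n/2) t)).card := by
    simp_rw [Finset.card_filter]
    rw [Finset.sum_comm]
  have h4 : (∑ t ∈ Finset.range (n*k), (univ.filter (V rj G g (n/2) t)).card) * (n - n/2)
      ≤ n * k * Fintype.card (Pf n) := by
    rw [Finset.sum_mul]
    refine (Finset.sum_le_sum fun t _ => V_card rj G g (n/2) t (by omega)).trans ?_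
    simp
  rw [h3] at h2
  have h5 : A.card * k^2 * (n - n/2) ≤ n * k * Fintype.card (Pf n) := (Nat.mul_le_mul_right _ h2).trans h4
  have h6 : n ≤ 2 * (n - n/2) := by omega
  have h7 : (A.card * k) * (n * k) ≤ (2 * Fintype.card (Pf n)) * (n * k) := by
    calc (A.card * k) * (n * k) = A.card * k^2 * n := by ring
      _ ≤ A.card * k^2 * (2 * (n - n/2)) := by gcongr
      _ = 2 * (A.card * k^2 * (n - n/2)) := by ring
      _ ≤ 2 * (n * k * Fintype.card (Pf n)) := by gcongr
      _ = _ := by ring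
  have h8 := Nat.le_of_mul_le_mul_right h7 (Nat.mul_pos (by omega) hk)
  exact_mod_cast h8

end prob
end SH


namespace SH
open Finset
open scoped Classical
variable {n : ℕ}

lemma stab_iff (P : PrefProfile n) (M : Fin n ≃ Fin n) : IsStableMatching P M ↔ Stab P.1 P.2 M := by
  unfold IsStableMatching Stab GirlPrefers BoyPrefers
  constructor
  · intro h g b h1 h2
    exact h ⟨g, b, by rintro rfl; exact lt_irrefl _ h1, h1, h2⟩
  · rintro h ⟨g, b, _, h1, h2⟩
    exact h g b h1 h2

lemma count_eq (P : PrefProfile n) (g : Fin n) : stableHusbandCount n P g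
    = (univ.filter fun b => ∃ M : Fin n ≃ Fin n, Stab P.1 P.2 M ∧ M g = b).card := by
  unfold stableHusbandCount
  simp_rw [stab_iff]
  rw [Nat.card_eq_fintype_card, Fintype.card_subtype]

noncomputable abbrev tau (P : PrefProfile n) (g : Fin n) : Equiv.Perm (Fin n) := P.1 g * sg P.1 P.2 g

lemma count_le (P : PrefProfile n) (g : Fin n) : stableHusbandCount n P g ≤ recs univ (tau P g) := by
  rw [count_eq, recs]
  apply Finset.card_le_card_of_injOn (fun b => (sg P.1 P.2 g).symm b)
  · intro b hb
    simp only [Finset.coe_filter, Finset.mem_univ, true_and, Set.mem_ofPred_eq] at hb ⊢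
    obtain ⟨M, hM, rfl⟩ := hb
    exact stable_rec M hM
  · exact (Equiv.injective _).injOn

def BestLe (P : PrefProfile n) (g : Fin n) (K : ℕ) : Prop :=
  ∃ M, Stab P.1 P.2 M ∧ (P.1 g (M g) : ℕ) ≤ K

def win (n D L : ℕ) : Finset (Fin n) := univ.filter fun i : Fin n => D ≤ (i:ℕ) ∧ (i:ℕ) < L

lemma le_count (P : PrefProfile n) (g : Fin n) (m D L K : ℕ)
    (h1 : ∀ h, ∃ b, (P.2 b h : ℕ) < S P.1 P.2 g m b)
    (h2 : (univ.filter fun b => (P.2 b g : ℕ) < S P.1 P.2 g m b).card ≤ D)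
    (h3 : BestLe P g K) (h4 : ¬ ∃ j : Fin n, (j:ℕ) < L ∧ (tau P g j : ℕ) ≤ K) :
    recs (win n D L) (tau P g) ≤ stableHusbandCount n P g := by
  rw [count_eq, recs]
  obtain ⟨M0, hM0, hK⟩ := h3
  apply Finset.card_le_card_of_injOn (fun i => sg P.1 P.2 g i)
  · intro i hi
    simp only [win, Finset.coe_filter, Finset.mem_filter, Finset.mem_univ, true_and, Set.mem_ofPred_eq] at hi ⊢
    refine rec_stable (m := m) (D := D) (fun h _ => h1 h) h2 M0 hM0 i hi.1.1 ?_ hi.2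
    by_contra hlt
    push Not at hlt
    apply h4
    refine ⟨(sg P.1 P.2 g).symm (M0 g), ?_, by simpa [tau] using hK⟩
    have : (((sg P.1 P.2 g).symm (M0 g) : Fin n) : ℕ) < i := hlt
    omega
  · exact (Equiv.injective _).injOn

lemma pr_equiv {α : Type} [Fintype α] (e : α ≃ α) (p : α → Prop) : pr (fun a => p (e a)) = pr p := by
  unfold pr
  congr 2
  apply Finset.card_bij' (fun a _ => e a) (fun a _ => e.symm a)
  · simp
  · simp
  · simp
  · simp

lemma pr_tau (g : Fin n) (E : Equiv.Perm (Fin n) → Prop) (e : ℝ) (h : pr E ≤ e) :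
    pr (fun P : PrefProfile n => E (tau P g)) ≤ e := by
  apply pr_fiber (β := Equiv.Perm (Fin n)) (fun P π => (Function.update P.1 g π, P.2)) (fun P => P.1 g)
  · intro P π; simp
  · intro P π; simp
  · intro P
    have hs : ∀ π, sg (Function.update P.1 g π) P.2 g = sg P.1 P.2 g := by
      intro π
      apply sg_congr
      intro x hx; simp [hx]
    simp only [tau, Function.update_self, hs]
    exact (pr_equiv (Equiv.mulRight (sg P.1 P.2 g)) E).le.trans h

lemma pr_val (j v : Fin n) : pr (fun τ : Equiv.Perm (Fin n) => τ j = v) ≤ 1 / n := by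
  have hn' : (0:ℝ) < n := by exact_mod_cast j.pos
  have h1 : ∀ v', pr (fun τ : Equiv.Perm (Fin n) => τ j = v') = pr (fun τ : Equiv.Perm (Fin n) => τ j = v) := by
    intro v'
    rw [← pr_equiv (Equiv.mulLeft (Equiv.swap v v')) (fun τ : Equiv.Perm (Fin n) => τ j = v)]
    congr 1
    funext τ
    simp only [Equiv.coe_mulLeft, Equiv.Perm.mul_apply, eq_iff_iff]
    rw [Equiv.swap_apply_eq_iff, Equiv.swap_apply_left]
  have h2 : ∑ v' : Fin n, pr (fun τ : Equiv.Perm (Fin n) => τ j = v') = 1 := by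
    unfold pr
    rw [← Finset.sum_div]
    have h := Finset.card_eq_sum_card_fiberwise (s := (univ : Finset (Equiv.Perm (Fin n)))) (t := univ)
      (f := fun τ => τ j) (by simp)
    rw [div_eq_one_iff_eq (by positivity), ← Finset.card_univ, h]
    push_cast
    refine Finset.sum_congr rfl fun v _ => ?_
    congr!
  simp_rw [h1] at h2
  simp at h2
  rw [le_div_iff₀ hn']; linarith

lemma pr_E4 (hn : 0 < n) (L K : ℕ) : pr (fun τ : Equiv.Perm (Fin n) => ∃ j : Fin n, (j:ℕ) < L ∧ (τ j : ℕ) ≤ K)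
    ≤ (L * (K+1)) / n := by
  have hc : ∀ L : ℕ, (univ.filter fun j : Fin n => (j:ℕ) < L).card ≤ L := by
    intro L
    calc _ ≤ (Finset.range L).card := by
          apply Finset.card_le_card_of_injOn (fun j : Fin n => (j:ℕ))
          · intro j hj; simpa using hj
          · exact Fin.val_injective.injOn
      _ = L := by simp
  set s := (univ.filter fun j : Fin n => (j:ℕ) < L) ×ˢ (univ.filter fun j : Fin n => (j:ℕ) < K+1) with hs
  have h1 : pr (fun τ : Equiv.Perm (Fin n) => ∃ j : Fin n, (j:ℕ) < L ∧ (τ j : ℕ) ≤ K)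
     ≤ pr (fun τ : Equiv.Perm (Fin n) => ∃ x ∈ s, τ x.1 = x.2) := by
    apply pr_mono
    rintro τ ⟨j, hj, hk⟩
    refine ⟨(j, τ j), ?_, rfl⟩
    simp only [hs, Finset.mem_product, Finset.mem_filter, Finset.mem_univ, true_and]
    exact ⟨hj, by omega⟩
  refine h1.trans ((pr_exists s _ (1/n) fun x _ => pr_val _ _).trans ?_)
  rw [mul_one_div]
  gcongr
  rw [hs, Finset.card_product]
  have := Nat.mul_le_mul (hc L) (hc (K+1))
  exact_mod_cast this

lemma pr_E1 (g : Fin n) (k : ℕ) :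
    pr (fun P : PrefProfile n => ¬ ∀ h, ∃ b, (P.2 b h : ℕ) < S P.1 P.2 g (n*k) b) ≤ n * Real.exp (-(k:ℝ)) := by
  apply pr_fiber (β := Pf n) (fun P f => (P.1, f)) (fun P => P.2)
  · intro P f; rfl
  · intro P f; rfl
  · intro P
    exact comp_pr _ P.1 k g.pos

lemma pr_E2 (g : Fin n) (k : ℕ) (hk : 0 < k) (hn : 2 ≤ n) :
    pr (fun P : PrefProfile n => ¬ (univ.filter fun b => (P.2 b g : ℕ) < S P.1 P.2 g (n*k) b).card ≤ k^2 + 3*k)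
      ≤ 2 / k := by
  apply pr_fiber (β := Pf n) (fun P f => (P.1, f)) (fun P => P.2)
  · intro P f; rfl
  · intro P f; rfl
  · intro P
    exact hits_pr _ P.1 g k hk hn

lemma pr_tot (k : ℕ) (hn : 0 < n) :
    pr (fun P : PrefProfile n => ¬ ∃ M, Stab P.1 P.2 M ∧ ∑ g, (P.1 g (M g) : ℕ) ≤ n*k) ≤ n * Real.exp (-(k:ℝ)) := by
  apply pr_fiber (β := Pf n) (fun P f => (f, P.2)) (fun P => P.1)
  · intro P f; rfl
  · intro P f; rfl
  · intro P
    refine le_trans (pr_mono ?_) (comp_pr (fun _ => False) P.2 k hn)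
    intro f hf hcomp
    apply hf
    obtain ⟨M, h1, h2⟩ := complete_stable P.2 f (n*k) hcomp
    refine ⟨M.symm, ?_, h2⟩
    intro h b a1 a2
    exact h1 b h a2 a1

def rename_perm (τ : Equiv.Perm (Fin n)) (P : PrefProfile n) : PrefProfile n :=
  (fun g => P.1 (τ g), fun b => P.2 b * τ)

lemma best_rename_perm (x y : Fin n) (P : PrefProfile n) (K : ℕ) (g : Fin n) (h : BestLe P (Equiv.swap x y g) K) :
    BestLe (rename_perm (Equiv.swap x y) P) g K := by
  obtain ⟨M, h1, h2⟩ := h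
  refine ⟨(Equiv.swap x y).trans M, ?_, h2⟩
  intro g' b a1 a2
  apply h1 (Equiv.swap x y g') b a1
  simpa [rename_perm] using a2

lemma pr_E3 (g : Fin n) (k : ℕ) (hk : 0 < k) :
    pr (fun P : PrefProfile n => ¬ BestLe P g (k^2)) ≤ 1 / k + n * Real.exp (-(k:ℝ)) := by
  have hn : 0 < n := g.pos
  have hn' : (0:ℝ) < n := by exact_mod_cast hn
  have hk' : (0:ℝ) < k := by exact_mod_cast hk
  have hrr : ∀ x y : Fin n, ∀ P : PrefProfile n, rename_perm (Equiv.swap x y) (rename_perm (Equiv.swap x y) P) = P := by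
    intro x y P
    simp [rename_perm, mul_assoc]
  have hsym : ∀ g', pr (fun P : PrefProfile n => ¬ BestLe P g (k^2)) ≤ pr (fun P : PrefProfile n => ¬ BestLe P g' (k^2)) := by
    intro g'
    let e : PrefProfile n ≃ PrefProfile n :=
      ⟨rename_perm (Equiv.swap g g'), rename_perm (Equiv.swap g g'), hrr g g', hrr g g'⟩
    rw [← pr_equiv e (fun P : PrefProfile n => ¬ BestLe P g' (k^2))]
    apply pr_mono
    intro P hP hb
    apply hP
    have := best_rename_perm g g' (e P) (k^2) g (by simpa using hb)
    rw [show rename_perm (Equiv.swap g g') (e P) = P from hrr g g' P] at this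
    exact this
  obtain ⟨Bad, hBad⟩ : ∃ Bad : PrefProfile n → Prop,
    Bad = fun P => ¬ ∃ M, Stab P.1 P.2 M ∧ ∑ g, (P.1 g (M g) : ℕ) ≤ n*k := ⟨_, rfl⟩
  have hT : (0:ℝ) < Fintype.card (PrefProfile n) := by
    have : 0 < Fintype.card (PrefProfile n) := Fintype.card_pos
    exact_mod_cast this
  have hP : ∀ P : PrefProfile n, ((univ.filter fun g' => ¬ BestLe P g' (k^2)).card : ℝ)
      ≤ n / k + n * (if Bad P then 1 else 0) := by
    intro P
    split_ifs with hb
    · have : ((univ.filter fun g' => ¬ BestLe P g' (k^2)).card : ℝ) ≤ n := by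
        have := Finset.card_le_univ (univ.filter fun g' => ¬ BestLe P g' (k^2))
        rw [Fintype.card_fin] at this
        exact_mod_cast this
      have : (0:ℝ) ≤ n / k := by positivity
      linarith
    · rw [hBad] at hb
      push Not at hb
      obtain ⟨M, h1, h2⟩ := hb
      have h3 : (univ.filter fun g' => ¬ BestLe P g' (k^2)).card * (k^2) ≤ ∑ g', (P.1 g' (M g') : ℕ) := by
        rw [← smul_eq_mul, ← Finset.sum_const]
        refine (Finset.sum_le_sum (g := fun g' => (P.1 g' (M g') : ℕ)) ?_).trans
            (Finset.sum_le_sum_of_subset (Finset.filter_subset _ _))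
        intro g' hg'
        simp only [Finset.mem_filter, Finset.mem_univ, true_and] at hg'
        by_contra hlt
        exact hg' ⟨M, h1, by omega⟩
      have h4 : ((univ.filter fun g' => ¬ BestLe P g' (k^2)).card * k) * k ≤ n * k := by
        calc _ = (univ.filter fun g' => ¬ BestLe P g' (k^2)).card * (k^2) := by ring
          _ ≤ _ := h3.trans h2
      have h5 := Nat.le_of_mul_le_mul_right h4 hk
      rw [mul_zero, add_zero, le_div_iff₀ hk']
      exact_mod_cast h5
  have hsum : ∑ g' : Fin n, pr (fun P : PrefProfile n => ¬ BestLe P g' (k^2)) ≤ n / k + n * pr Bad := by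
    unfold pr
    rw [← Finset.sum_div, div_le_iff₀ hT]
    have e1 : ∑ g' : Fin n, ((univ.filter fun P : PrefProfile n => ¬ BestLe P g' (k^2)).card : ℝ)
        = ∑ P : PrefProfile n, ((univ.filter fun g' => ¬ BestLe P g' (k^2)).card : ℝ) := by
      simp_rw [← Finset.sum_boole]
      rw [Finset.sum_comm]
    have e2 : ∑ P : PrefProfile n, ((n:ℝ) / k + n * (if Bad P then 1 else 0))
       = (n / k + n * (((univ.filter Bad).card : ℝ) / Fintype.card (PrefProfile n))) * Fintype.card (PrefProfile n) := by
      rw [Finset.sum_add_distrib, ← Finset.mul_sum, Finset.sum_boole, Finset.sum_const, nsmul_eq_mul, Finset.card_univ]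
      field_simp
    rw [← e2]
    refine le_trans (le_of_eq ?_) ((le_of_eq e1).trans (Finset.sum_le_sum fun P _ => hP P))
    congr!
  have h6 : (n:ℝ) * pr (fun P : PrefProfile n => ¬ BestLe P g (k^2)) ≤ n / k + n * pr Bad := by
    refine le_trans ?_ hsum
    have := Finset.sum_le_sum fun g' (_ : g' ∈ (univ : Finset (Fin n))) => hsym g'
    simpa using this
  have h7 : pr Bad ≤ n * Real.exp (-(k:ℝ)) := by rw [hBad]; exact pr_tot k hn
  have h8 : (n:ℝ) * pr (fun P : PrefProfile n => ¬ BestLe P g (k^2)) ≤ n * (1 / k + pr Bad) := by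
    rw [mul_add, mul_one_div]; exact h6
  have h9 := le_of_mul_le_mul_left h8 hn'
  linarith

/-! ### harmonic sums -/
lemma mu_univ : mu (univ : Finset (Fin n)) ≤ 1 + Real.log n := by
  have h := harmonic_le_one_add_log n
  refine le_trans (le_of_eq ?_) h
  unfold mu harmonic
  rw [Fin.sum_univ_eq_sum_range (fun i => 1 / ((i:ℝ)+1)) n]
  push_cast
  refine Finset.sum_congr rfl fun i _ => by rw [one_div]

lemma mu_le (s : Finset (Fin n)) : mu s ≤ 1 + Real.log n := by
  refine le_trans ?_ (mu_univ (n := n))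
  unfold mu
  apply Finset.sum_le_sum_of_subset_of_nonneg (Finset.subset_univ _)
  intro i _ _; positivity

lemma log_le_sum (D L : ℕ) (h : D ≤ L) :
    Real.log (L+1) - Real.log (D+1) ≤ ∑ i ∈ Finset.Ico D L, 1 / ((i:ℝ)+1) := by
  induction L, h using Nat.le_induction with
  | base => simp
  | succ L h ih =>
    rw [Finset.sum_Ico_succ_top h]
    have : Real.log ((L:ℝ)+1+1) - Real.log ((L:ℝ)+1) ≤ 1 / ((L:ℝ)+1) := by
      rw [← Real.log_div (by positivity) (by positivity)]
      have h1 := Real.log_le_sub_one_of_pos (x := ((L:ℝ)+1+1)/((L:ℝ)+1)) (by positivity)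
      refine h1.trans (le_of_eq ?_)
      field_simp
      ring
    push_cast
    linarith

lemma mu_win (D L : ℕ) (hL : L ≤ n) : Real.log (L+1) - Real.log (D+1) ≤ mu (win n D L) := by
  by_cases h : D ≤ L
  · refine (log_le_sum D L h).trans (le_of_eq ?_)
    unfold mu
    symm
    apply Finset.sum_nbij (fun i : Fin n => (i:ℕ))
    · intro i hi; simpa [win] using hi
    · exact Fin.val_injective.injOn
    · intro i hi
      simp only [Finset.coe_Ico, Set.mem_Ico] at hi
      exact ⟨⟨i, by omega⟩, by simpa [win] using hi, rfl⟩
    · intro i _; rfl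
  · push Not at h
    have : Real.log ((L:ℝ)+1) ≤ Real.log ((D:ℝ)+1) := by
      apply Real.log_le_log (by positivity)
      have : (L:ℝ) ≤ D := by exact_mod_cast h.le
      linarith
    have := mu_nonneg (win n D L)
    linarith

lemma bad_bound (c C : ℝ) (hc : c < 1/2) (hC : 1 < C) (g : Fin n) (hn : 2 ≤ n)
    (l1 : 1 ≤ Real.log n) (l2 : 2 ≤ (C - 1) * Real.log n)
    (l3 : 25 * 3^10 * (Real.log n)^10 ≤ n) :
    pr (fun P : PrefProfile n => ¬ (c * Real.log n ≤ (stableHusbandCount n P g : ℝ) ∧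
      (stableHusbandCount n P g : ℝ) ≤ C * Real.log n))
    ≤ (5 + 2 / (1/2 - c)^2 + 8 / (C-1)^2) / Real.log n := by
  set l := Real.log n with hl
  have hn' : (0:ℝ) < n := by exact_mod_cast g.pos
  set k := ⌈2 * l⌉₊ with hk
  have hk1 : 2 * l ≤ k := Nat.le_ceil _
  have hk2 : (k:ℝ) ≤ 3 * l := by
    have := Nat.ceil_lt_add_one (a := 2 * l) (by linarith)
    linarith
  have hk' : (0:ℝ) < k := by linarith
  have hk0 : 0 < k := by exact_mod_cast hk'
  have hkk : (1:ℝ) ≤ k := by exact_mod_cast hk0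
  set D := k^2 + 3*k with hD
  set L := n / k^3 with hL
  have hLn : L ≤ n := Nat.div_le_self _ _
  -- exp bound
  have hexp : n * Real.exp (-(k:ℝ)) ≤ 1 / l := by
    have e1 : (n:ℝ) = Real.exp l := by rw [hl, Real.exp_log hn']
    rw [e1, ← Real.exp_add]
    have e2 : Real.exp (l + -(k:ℝ)) ≤ Real.exp (-l) := Real.exp_le_exp.mpr (by linarith)
    refine e2.trans ?_
    rw [Real.exp_neg, ← one_div]
    have := Real.add_one_le_exp l
    apply one_div_le_one_div_of_le (by linarith) (by linarith)
  have hinv : 1 / (k:ℝ) ≤ 1 / (2 * l) := one_div_le_one_div_of_le (by linarith) hk1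
  have hinv2 : 2 / (k:ℝ) ≤ 1 / l := by
    have : 2 / (k:ℝ) = 2 * (1 / k) := by ring
    rw [this]
    have : 1 / l = 2 * (1 / (2*l)) := by field_simp
    rw [this]; linarith
  have p1 := (pr_E1 g k).trans hexp
  have p2 := (pr_E2 g k hk0 hn).trans hinv2
  have p3 : pr (fun P : PrefProfile n => ¬ BestLe P g (k^2)) ≤ 2 / l := by
    refine (pr_E3 g k hk0).trans ?_
    have : 1 / (k:ℝ) ≤ 2 / k := by gcongr; norm_num
    have : 2 / l = 1 / l + 1 / l := by ring
    linarith
  have p4 : pr (fun P : PrefProfile n => ∃ j : Fin n, (j:ℕ) < L ∧ (tau P g j : ℕ) ≤ k^2) ≤ 1 / l := by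
    apply pr_tau g (fun τ => ∃ j : Fin n, (j:ℕ) < L ∧ (τ j : ℕ) ≤ k^2)
    refine (pr_E4 g.pos L (k^2)).trans (le_trans ?_ hinv2)
    have hLk : (L:ℝ) * k^3 ≤ n := by
      have := Nat.div_mul_le_self n (k^3)
      exact_mod_cast this
    rw [div_le_div_iff₀ hn' hk']
    push_cast
    have hL0 : (0:ℝ) ≤ L := by positivity
    have : (L:ℝ) * (k^2+1) * k ≤ 2 * (L * k^3) := by
      have h1 : (k:ℝ) ≤ k^3 := le_self_pow₀ hkk (by norm_num)
      nlinarith [mul_le_mul_of_nonneg_left h1 hL0]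
    linarith
  have hmu : l / 2 ≤ mu (win n D L) := by
    refine le_trans ?_ (mu_win D L hLn)
    rw [← Real.log_div (by positivity) (by positivity)]
    have hL1 : (n:ℝ) ≤ ((L:ℝ)+1) * k^3 := by
      have := Nat.lt_div_mul_add (a := n) (b := k^3) (by positivity)
      have h2 : n ≤ (L+1) * k^3 := by rw [add_mul, one_mul]; exact this.le
      exact_mod_cast h2
    have hsq : l / 2 = Real.log (Real.sqrt n) := by rw [Real.log_sqrt hn'.le]
    rw [hsq]
    apply Real.log_le_log (by positivity)
    rw [le_div_iff₀ (by positivity)]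
    have hD1 : ((D:ℝ)+1) * k^3 ≤ 5 * (3*l)^5 := by
      have a : ((D:ℝ)+1) ≤ 5 * k^2 := by rw [hD]; push_cast; nlinarith
      calc ((D:ℝ)+1) * k^3 ≤ 5 * k^2 * k^3 := by gcongr
        _ = 5 * (k:ℝ)^5 := by ring
        _ ≤ _ := by gcongr
    have hs5 : 5 * (3*l)^5 ≤ Real.sqrt n := by
      apply Real.le_sqrt_of_sq_le
      calc ((5:ℝ) * (3*l)^5)^(2:ℕ) = 25 * 3^10 * l^10 := by ring
        _ ≤ (n:ℝ) := l3
    have hk3 : (0:ℝ) < k^3 := by positivity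
    have : (Real.sqrt n * ((D:ℝ)+1)) * k^3 ≤ ((L:ℝ)+1) * k^3 := by
      calc (Real.sqrt n * ((D:ℝ)+1)) * k^3 = Real.sqrt n * (((D:ℝ)+1) * k^3) := by ring
        _ ≤ Real.sqrt n * Real.sqrt n := by gcongr; exact hD1.trans hs5
        _ = n := Real.mul_self_sqrt hn'.le
        _ ≤ _ := hL1
    exact le_of_mul_le_mul_right this hk3
  have hl0 : 0 < l := by linarith
  have p5 : pr (fun P : PrefProfile n => (recs (win n D L) (tau P g) : ℝ) < c * l) ≤ (2 / (1/2 - c)^2) / l := by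
    apply pr_tau g (fun τ => (recs (win n D L) τ : ℝ) < c * l)
    have ha : 0 < (1/2 - c) * l := by apply mul_pos <;> linarith
    refine le_trans (pr_mono ?_) ((recs_cheb (win n D L) ((1/2 - c) * l) ha).trans ?_)
    · intro τ h
      rw [abs_sub_comm]
      refine le_trans ?_ (le_abs_self _)
      linarith
    · have h1 := mu_le (win n D L)
      have h2 : mu (win n D L) ≤ 2 * l := by linarith
      have h0 : 0 < 1/2 - c := by linarith
      rw [div_div, div_le_div_iff₀ (by positivity) (by positivity)]
      have : 0 ≤ (1/2-c)^2 * l := by positivity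
      nlinarith [mul_le_mul_of_nonneg_right h2 this]
  have p6 : pr (fun P : PrefProfile n => C * l < (recs univ (tau P g) : ℝ)) ≤ (8 / (C-1)^2) / l := by
    apply pr_tau g (fun τ => C * l < (recs univ τ : ℝ))
    have h0 : 0 < C - 1 := by linarith
    have ha : 0 < (C-1)/2 * l := by positivity
    refine le_trans (pr_mono ?_) ((recs_cheb univ ((C-1)/2 * l) ha).trans ?_)
    · intro τ h
      refine le_trans ?_ (le_abs_self _)
      have := mu_univ (n := n)
      linarith
    · have h1 := mu_le (univ : Finset (Fin n))
      have h2 : mu (univ : Finset (Fin n)) ≤ 2 * l := by linarith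
      rw [div_div, div_le_div_iff₀ (by positivity) (by positivity)]
      have : 0 ≤ (C-1)^2 * l := by positivity
      nlinarith [mul_le_mul_of_nonneg_right h2 this]
  have hfin : pr (fun P : PrefProfile n => ¬ (c * l ≤ (stableHusbandCount n P g : ℝ) ∧
      (stableHusbandCount n P g : ℝ) ≤ C * l)) ≤
      pr (fun P : PrefProfile n => (¬ ∀ h, ∃ b, (P.2 b h : ℕ) < S P.1 P.2 g (n*k) b) ∨
        (¬ (univ.filter fun b => (P.2 b g : ℕ) < S P.1 P.2 g (n*k) b).card ≤ k^2 + 3*k) ∨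
        (¬ BestLe P g (k^2)) ∨ (∃ j : Fin n, (j:ℕ) < L ∧ (tau P g j : ℕ) ≤ k^2) ∨
        ((recs (win n D L) (tau P g) : ℝ) < c * l) ∨ (C * l < (recs univ (tau P g) : ℝ))) := by
    apply pr_mono
    intro P hP
    by_contra hcon
    rw [not_or, not_or, not_or, not_or, not_or, not_not, not_not, not_not, not_lt, not_lt] at hcon
    obtain ⟨h1, h2, h3, h4, h5, h6⟩ := hcon
    apply hP
    constructor
    · refine h5.trans ?_
      exact_mod_cast le_count P g (n*k) D L (k^2) h1 h2 h3 h4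
    · refine le_trans ?_ h6
      exact_mod_cast count_le P g
  refine hfin.trans ?_
  refine (pr_or _ _).trans ?_
  have q1 := pr_or (fun P : PrefProfile n => ¬ (univ.filter fun b => (P.2 b g : ℕ) < S P.1 P.2 g (n*k) b).card ≤ k^2 + 3*k)
    (fun P => (¬ BestLe P g (k^2)) ∨ (∃ j : Fin n, (j:ℕ) < L ∧ (tau P g j : ℕ) ≤ k^2) ∨
        ((recs (win n D L) (tau P g) : ℝ) < c * l) ∨ (C * l < (recs univ (tau P g) : ℝ)))
  have q2 := pr_or (fun P : PrefProfile n => ¬ BestLe P g (k^2)) (fun P => (∃ j : Fin n, (j:ℕ) < L ∧ (tau P g j : ℕ) ≤ k^2) ∨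
        ((recs (win n D L) (tau P g) : ℝ) < c * l) ∨ (C * l < (recs univ (tau P g) : ℝ)))
  have q3 := pr_or (fun P : PrefProfile n => ∃ j : Fin n, (j:ℕ) < L ∧ (tau P g j : ℕ) ≤ k^2) (fun P =>
        ((recs (win n D L) (tau P g) : ℝ) < c * l) ∨ (C * l < (recs univ (tau P g) : ℝ)))
  have q4 := pr_or (fun P : PrefProfile n => (recs (win n D L) (tau P g) : ℝ) < c * l) (fun P =>
        (C * l < (recs univ (tau P g) : ℝ)))
  have : (5 + 2 / (1/2 - c)^2 + 8 / (C-1)^2) / l = 1/l + 1/l + 2/l + 1/l + (2 / (1/2 - c)^2)/l + (8 / (C-1)^2)/l := by ring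
  rw [this]
  linarith

end SH


/-- **Main theorem.** Fix constants `0 < c < 1/2` and `C > 1`.  Under a
uniformly random preference profile for `n` girls and `n` boys (probability =
number of favorable profiles divided by the total number of profiles), the
number `Hₙ` of stable husbands of a fixed girl (girl `0`) satisfies
`Pr(c ln n ≤ Hₙ ≤ C ln n) → 1` as `n → ∞`.  (The sequence is indexed by
`n + 1` so that girl `0` exists for every index.) -/
theorem main_theorem (c C : ℝ) (hc0 : 0 < c) (hc : c < 1 / 2) (hC : 1 < C) :
    Filter.Tendsto (fun n : ℕ =>
        (Nat.card {P : PrefProfile (n + 1) //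
            c * Real.log ((n : ℝ) + 1) ≤ (stableHusbandCount (n + 1) P 0 : ℝ) ∧
            (stableHusbandCount (n + 1) P 0 : ℝ) ≤ C * Real.log ((n : ℝ) + 1)} : ℝ) /
          (Nat.card (PrefProfile (n + 1)) : ℝ))
      Filter.atTop (nhds 1) := by
  have hcard : ∀ n : ℕ, (Nat.card {P : PrefProfile (n + 1) //
            c * Real.log ((n : ℝ) + 1) ≤ (stableHusbandCount (n + 1) P 0 : ℝ) ∧
            (stableHusbandCount (n + 1) P 0 : ℝ) ≤ C * Real.log ((n : ℝ) + 1)} : ℝ) /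
          (Nat.card (PrefProfile (n + 1)) : ℝ)
      = 1 - SH.pr (fun P : PrefProfile (n+1) => ¬ (c * Real.log ((n + 1 : ℕ) : ℝ) ≤ (stableHusbandCount (n+1) P 0 : ℝ) ∧
      (stableHusbandCount (n+1) P 0 : ℝ) ≤ C * Real.log ((n+1 : ℕ) : ℝ))) := by
    intro n
    classical
    rw [← SH.pr_not]
    unfold SH.pr
    rw [Nat.card_eq_fintype_card, Nat.card_eq_fintype_card, Fintype.card_subtype]
    push_cast
    congr!
  simp_rw [hcard]
  have hlog : Filter.Tendsto (fun n : ℕ => Real.log ((n + 1 : ℕ) : ℝ)) Filter.atTop Filter.atTop :=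
    Real.tendsto_log_atTop.comp (tendsto_natCast_atTop_atTop.comp (Filter.tendsto_add_atTop_nat 1))
  have hup : Filter.Tendsto (fun n : ℕ => (5 + 2 / (1/2 - c)^2 + 8 / (C-1)^2) / Real.log ((n + 1 : ℕ) : ℝ))
      Filter.atTop (nhds 0) := hlog.const_div_atTop _
  have hpow : ∀ᶠ n : ℕ in Filter.atTop, 25 * 3^10 * (Real.log ((n+1 : ℕ) : ℝ))^10 ≤ ((n+1 : ℕ) : ℝ) := by
    have h1 := (Real.isLittleO_pow_log_id_atTop (n := 10)).bound (c := 1 / (25 * 3^10)) (by positivity)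
    have h2 : Filter.Tendsto (fun n : ℕ => ((n + 1 : ℕ) : ℝ)) Filter.atTop Filter.atTop :=
      tendsto_natCast_atTop_atTop.comp (Filter.tendsto_add_atTop_nat 1)
    filter_upwards [h2.eventually h1] with n hn
    have h3 : ‖Real.log ((n+1 : ℕ) : ℝ) ^ 10‖ = Real.log ((n+1 : ℕ) : ℝ) ^ 10 :=
      Real.norm_of_nonneg (by positivity)
    have h4 : ‖id ((n+1 : ℕ) : ℝ)‖ = ((n+1 : ℕ) : ℝ) := Real.norm_of_nonneg (by simp only [id]; positivity)
    rw [h3, h4] at hn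
    linarith
  have hlim : Filter.Tendsto (fun n : ℕ => SH.pr (fun P : PrefProfile (n+1) => ¬ (c * Real.log ((n + 1 : ℕ) : ℝ) ≤ (stableHusbandCount (n+1) P 0 : ℝ) ∧
      (stableHusbandCount (n+1) P 0 : ℝ) ≤ C * Real.log ((n+1 : ℕ) : ℝ)))) Filter.atTop (nhds 0) := by
    refine tendsto_of_tendsto_of_tendsto_of_le_of_le' tendsto_const_nhds hup ?_ ?_
    · exact Filter.Eventually.of_forall fun n => SH.pr_nonneg _
    · filter_upwards [hpow, hlog.eventually_ge_atTop 1, hlog.eventually_ge_atTop (2 / (C - 1)),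
        Filter.eventually_ge_atTop 1] with n h1 h2 h3 h4
      refine SH.bad_bound c C hc hC 0 (by omega) h2 ?_ h1
      rw [div_le_iff₀ (by linarith)] at h3
      linarith
  have := hlim.const_sub 1
  simpa using this
end
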